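/- arXiv:2501.06853 — 5 statements merged into one kernel-verified Lean document; each statement's English description precedes it below -/
import Mathlib

section
/- For every integer k ≥ 2, the relative Turán density of the ascending path P_k equals (k−1)/(2k); that is, ρ(P_k) = (k−1)/(2k). -/
/-! A graph is free of the ascending path with `k` edges exactly when its vertices can be labelled by
`k` ordered labels that increase along every edge (label each vertex by the length of a longest
ascending path ending there). So the relative Turán density is the largest proportion of edges of `G`
along which some labelling increases, in the worst case over `G`.

*Lower bound.* A random labelling increases along a given edge with probability `(k - 1) / (2 * k)`
(`exists_subgraph`).

*Upper bound.* Put weights on the pairs `i < j < 2 ^ S` so that all `S` levels of the binary tree on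
`0, …, 2 ^ S - 1` carry the same total weight (`dyadicWeight`). At a node whose two children have the
same label distribution, Cauchy–Schwarz bounds the increasing proportion by `(k - 1) / (2 * k)`. The
excess at other nodes is paid for by an increment of the `ℓ²` energy of the label distribution, and
these increments have bounded sum over all levels, whatever `S` is (`dyadic_asc_le`). For large `S`
the weighted graph is thus nearly extremal, even for fractional labellings.

To pass to a simple graph, replace each `i` by the affine plane over `ZMod p`, and a pair of weight
`w` by the union of `w` shifted point–line incidence graphs. These are quasirandom (`inc_le`), so a
labelling of the blow-up behaves like a fractional labelling of the weighted graph, with an error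
that vanishes as `p` grows (`sum_label_le`, `exists_graph`). -/

/-- The number of edges of a graph. -/
noncomputable def eCount {n : ℕ} (G : SimpleGraph (Fin n)) : ℕ := G.edgeSet.ncard

/-- An ordered graph `G` on `Fin n` contains an ordered graph `F` on `Fin m` if there is a
strictly increasing map sending edges of `F` to edges of `G`. -/
def OContains {m n : ℕ} (F : SimpleGraph (Fin m)) (G : SimpleGraph (Fin n)) : Prop :=
  ∃ g : Fin m → Fin n, StrictMono g ∧ ∀ u v, F.Adj u v → G.Adj (g u) (g v)

/-- `G` is `F`-free if it contains no copy of `F`. -/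
def OFree {m n : ℕ} (F : SimpleGraph (Fin m)) (G : SimpleGraph (Fin n)) : Prop :=
  ¬ OContains F G

/-- The relative Turán density of an ordered graph `F`: the supremum of all `ς ∈ [0,1]`
such that every ordered graph `G` has an `F`-free subgraph `G'` with `e(G') ≥ ς·e(G)`. -/
noncomputable def relTuran {m : ℕ} (F : SimpleGraph (Fin m)) : ℝ :=
  sSup {ς : ℝ | ς ∈ Set.Icc 0 1 ∧ ∀ (n : ℕ) (G : SimpleGraph (Fin n)),
    ∃ G' ≤ G, OFree F G' ∧ ς * (eCount G : ℝ) ≤ (eCount G' : ℝ)}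

/-- The ascending path with `k` edges, on `k+1` vertices. -/
def ascPath (k : ℕ) : SimpleGraph (Fin (k + 1)) :=
  SimpleGraph.fromRel (fun i j => (i : ℕ) + 1 = (j : ℕ))

open Finset

/-! ### Increasing labellings and the lower bound -/

lemma eCount_eq {n : ℕ} (G : SimpleGraph (Fin n)) [DecidableRel G.Adj] :
    eCount G = #{e : Fin n × Fin n | e.1 < e.2 ∧ G.Adj e.1 e.2} := by
  classical
  have : G.edgeSet = ((fun e : Fin n × Fin n => s(e.1, e.2)) ''
      (({e : Fin n × Fin n | e.1 < e.2 ∧ G.Adj e.1 e.2} : Finset _) : Set (Fin n × Fin n))) := by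
    ext e
    induction e with | h u v => ?_
    simp only [SimpleGraph.mem_edgeSet, coe_filter, mem_univ, true_and, Set.mem_image,
      Set.mem_ofPred_eq, Prod.exists]
    constructor
    · intro h
      rcases lt_or_gt_of_ne h.ne with h' | h'
      · exact ⟨u, v, ⟨h', h⟩, rfl⟩
      · exact ⟨v, u, ⟨h', h.symm⟩, Sym2.eq_swap⟩
    · rintro ⟨a, b, ⟨-, h⟩, hab⟩
      rcases Sym2.eq_iff.1 hab with ⟨rfl, rfl⟩ | ⟨rfl, rfl⟩
      · exact h
      · exact h.symm
  unfold eCount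
  rw [this, Set.InjOn.ncard_image, Set.ncard_coe_finset]
  rintro ⟨a, b⟩ h ⟨c, d⟩ h' hab
  simp only [coe_filter, mem_univ, true_and, Set.mem_ofPred_eq] at h h'
  rcases Sym2.eq_iff.1 hab with ⟨h1, h2⟩ | ⟨h1, h2⟩
  · exact Prod.ext h1 h2
  · simp only at h1 h2
    subst h1 h2
    exact absurd h.1 h'.1.not_gt

lemma eCount_eq_sum {n : ℕ} (G : SimpleGraph (Fin n)) [DecidableRel G.Adj] :
    (eCount G : ℝ) = ∑ u, ∑ v, if u < v ∧ G.Adj u v then (1 : ℝ) else 0 := by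
  rw [eCount_eq, ← Finset.sum_product', univ_product_univ, sum_boole]

/-- `EndsPath G j v` says that some ascending path with `j` edges in `G` ends at `v`. -/
def EndsPath {n : ℕ} (G : SimpleGraph (Fin n)) : ℕ → Fin n → Prop
  | 0, _ => True
  | j + 1, v => ∃ u, u < v ∧ G.Adj u v ∧ EndsPath G j u

lemma EndsPath.exists_path {n : ℕ} {G : SimpleGraph (Fin n)} (j : ℕ) :
    ∀ v, EndsPath G j v → ∃ g : Fin (j + 1) → Fin n, StrictMono g ∧ g (Fin.last j) = v ∧
      ∀ i : Fin j, G.Adj (g i.castSucc) (g i.succ) := by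
  induction j with
  | zero => exact fun v _ => ⟨fun _ => v, fun a b h => absurd h (by omega), rfl, fun i => i.elim0⟩
  | succ j ih =>
    rintro v ⟨u, huv, hadj, hu⟩
    obtain ⟨g, hg, hl, hG⟩ := ih u hu
    have key : ∀ i : Fin (j + 1),
        (Fin.snoc g v : Fin (j + 2) → Fin n) i.castSucc
            < (Fin.snoc g v : Fin (j + 2) → Fin n) i.succ ∧
          G.Adj ((Fin.snoc g v : Fin (j + 2) → Fin n) i.castSucc)
            ((Fin.snoc g v : Fin (j + 2) → Fin n) i.succ) := by
      intro i
      induction i using Fin.lastCases with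
      | last =>
        simp only [Fin.snoc_castSucc, Fin.succ_last, Fin.snoc_last, hl]
        exact ⟨huv, hadj⟩
      | cast i =>
        rw [Fin.succ_castSucc]
        simp only [Fin.snoc_castSucc]
        exact ⟨hg (Fin.castSucc_lt_succ), hG i⟩
    exact ⟨Fin.snoc g v, Fin.strictMono_iff_lt_succ.2 fun i => (key i).1, by simp,
      fun i => (key i).2⟩

/-- The label of `v` is the length of a longest ascending path ending at `v`. -/
lemma OFree.exists_label {n k : ℕ} (hk : 0 < k) {G : SimpleGraph (Fin n)}
    (h : OFree (ascPath k) G) :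
    ∃ f : Fin n → Fin k, ∀ u v, u < v → G.Adj u v → f u < f v := by
  classical
  have hno : ∀ v, ¬ EndsPath G k v := by
    intro v hv
    obtain ⟨g, hg, -, hG⟩ := EndsPath.exists_path k v hv
    refine h ⟨g, hg, fun a b hab => ?_⟩
    have main : ∀ a b : Fin (k + 1), (a : ℕ) + 1 = b → G.Adj (g a) (g b) := by
      intro a b hab
      have e : b = (⟨a, by omega⟩ : Fin k).succ := Fin.ext hab.symm
      rw [e]
      exact hG ⟨a, by omega⟩
    rw [ascPath, SimpleGraph.fromRel_adj] at hab
    rcases hab.2 with h' | h'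
    · exact main a b h'
    · exact (main b a h').symm
  refine ⟨fun v => ⟨Nat.findGreatest (fun j => EndsPath G j v) (k - 1),
    lt_of_le_of_lt (Nat.findGreatest_le _) (by omega)⟩, fun u v huv hadj => ?_⟩
  rw [Fin.mk_lt_mk]
  set m := Nat.findGreatest (fun j => EndsPath G j u) (k - 1) with hm
  have hu : EndsPath G m u :=
    Nat.findGreatest_spec (P := fun j => EndsPath G j u) (Nat.zero_le (k - 1)) trivial
  have hv : EndsPath G (m + 1) v := ⟨u, huv, hadj, hu⟩
  have hle : m ≤ k - 1 := Nat.findGreatest_le _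
  have hne : m + 1 ≠ k := fun e => hno v (e ▸ hv)
  exact Nat.lt_of_succ_le (Nat.le_findGreatest (by omega) hv)

/-- A copy of the path would need `k + 1` labels, all distinct. -/
lemma oFree_of_label {n k : ℕ} {G : SimpleGraph (Fin n)} (f : Fin n → Fin k)
    (hf : ∀ u v, u < v → G.Adj u v → f u < f v) : OFree (ascPath k) G := by
  rintro ⟨g, hg, hG⟩
  have : StrictMono (f ∘ g) := Fin.strictMono_iff_lt_succ.2 fun i =>
    hf _ _ (hg Fin.castSucc_lt_succ) (hG _ _ (by
      rw [ascPath, SimpleGraph.fromRel_adj]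
      exact ⟨Fin.castSucc_lt_succ.ne, Or.inl (by simp)⟩))
  have := Fintype.card_le_of_injective _ this.injective
  simp at this

/-- A uniformly random labelling increases along a given pair with probability
`(k - 1) / (2 * k)`. -/
lemma sum_label_lt {n k : ℕ} {u v : Fin n} (huv : u ≠ v) :
    2 * k * ∑ f : Fin n → Fin k, (if f u < f v then (1 : ℝ) else 0) = k ^ n * ((k : ℝ) - 1) := by
  -- Summing over the label of `u` leaves the number of labels below that of `v`.
  have h1 : ∑ f : Fin n → Fin k, (if f u < f v then (1 : ℝ) else 0)
      = ∑ h : {j // j ≠ u} → Fin k, ((h ⟨v, huv.symm⟩ : ℕ) : ℝ) := by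
    rw [← (Equiv.funSplitAt u (Fin k)).symm.sum_comp, Fintype.sum_prod_type_right]
    refine sum_congr rfl fun h _ => ?_
    simp [Equiv.funSplitAt, Equiv.piSplitAt, huv.symm]
    rw [Finset.filter_gt_eq_Iio]
    simp
  -- Reversing the order of the labels shows that the average label is `(k - 1) / 2`.
  have h2 : ∑ h : {j // j ≠ u} → Fin k, ((h ⟨v, huv.symm⟩ : ℕ) : ℝ)
      = ∑ h : {j // j ≠ u} → Fin k, (((k : ℝ) - 1) - ((h ⟨v, huv.symm⟩ : ℕ) : ℝ)) := by
    rw [← (Equiv.arrowCongr (Equiv.refl {j // j ≠ u}) (Fin.revPerm (n := k))).sum_comp]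
    refine sum_congr rfl fun h _ => ?_
    have := (h ⟨v, huv.symm⟩).isLt
    simp only [Equiv.arrowCongr_apply, Function.comp, Equiv.refl_symm, Equiv.refl_apply,
      Fin.revPerm_apply, Fin.val_rev]
    rw [Nat.cast_sub (by omega)]
    push_cast; ring
  have h3 : (k : ℝ) ^ n = k * (Fintype.card ({j // j ≠ u} → Fin k) : ℝ) := by
    have := Fintype.card_congr (Equiv.funSplitAt u (Fin k))
    simp only [Fintype.card_prod, Fintype.card_fin, Fintype.card_fun] at this
    simp only [Fintype.card_fun, Fintype.card_fin]
    exact_mod_cast this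
  rw [sum_sub_distrib, sum_const, nsmul_eq_mul, card_univ] at h2
  rw [h1, h3]
  linear_combination (k : ℝ) * h2

/-- Averaging over all labellings, one of them increases along at least the proportion
`(k - 1) / (2 * k)` of the edges of `G`. -/
lemma exists_subgraph {n k : ℕ} (hk : 0 < k) (G : SimpleGraph (Fin n)) :
    ∃ G' ≤ G, OFree (ascPath k) G' ∧
      ((k : ℝ) - 1) / (2 * k) * (eCount G : ℝ) ≤ (eCount G' : ℝ) := by
  classical
  have hk' : (0 : ℝ) < k := by exact_mod_cast hk
  let H : (Fin n → Fin k) → SimpleGraph (Fin n) := fun f =>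
    G ⊓ SimpleGraph.fromRel fun u v => u < v ∧ f u < f v
  have hH : ∀ f u v, u < v → ((H f).Adj u v ↔ G.Adj u v ∧ f u < f v) := by
    intro f u v huv
    simp only [H, SimpleGraph.inf_adj, SimpleGraph.fromRel_adj]
    simp [huv, huv.ne, huv.not_gt]
  have hcount : ∀ f, (eCount (H f) : ℝ)
      = ∑ u, ∑ v, if u < v ∧ G.Adj u v then (if f u < f v then (1 : ℝ) else 0) else 0 := by
    intro f
    rw [eCount_eq_sum]
    refine sum_congr rfl fun u _ => sum_congr rfl fun v _ => ?_
    by_cases huv : u < v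
    · simp only [huv, hH f u v huv, true_and, ite_and]
    · simp [huv]
  have hsum : ∑ f : Fin n → Fin k, (eCount (H f) : ℝ)
      = ∑ _f : Fin n → Fin k, ((k : ℝ) - 1) / (2 * k) * (eCount G : ℝ) := by
    simp only [hcount]
    rw [sum_comm, sum_congr rfl fun u _ => sum_comm, sum_const, card_univ, nsmul_eq_mul,
      eCount_eq_sum]
    simp only [mul_sum]
    refine sum_congr rfl fun u _ => sum_congr rfl fun v _ => ?_
    split_ifs with h
    · have := sum_label_lt (k := k) h.1.ne
      simp only [Fintype.card_fun, Fintype.card_fin, mul_one]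
      push_cast
      field_simp
      linear_combination this
    · simp
  have : Nonempty (Fin k) := ⟨⟨0, hk⟩⟩
  obtain ⟨f, -, hf⟩ := exists_le_of_sum_le univ_nonempty hsum.ge
  exact ⟨H f, inf_le_left, oFree_of_label f fun u v huv h => ((hH f u v huv).1 h).2, hf⟩

/-! ### Dyadic weights and the energy increment -/

/-- The bilinear form `∑_{a<b} U a * V b`. When `U` and `V` are the label distributions of two
vertex sets joined by a quasirandom bipartite graph, it is the fraction of the edges between them
whose labels increase. -/
def asc {k : ℕ} (U V : Fin k → ℝ) : ℝ := ∑ a, ∑ b, if a < b then U a * V b else 0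

/-- The squared Euclidean norm of a vector of label masses. -/
def energy {k : ℕ} (U : Fin k → ℝ) : ℝ := ∑ a, U a ^ 2

lemma asc_self {k : ℕ} (U : Fin k → ℝ) :
    2 * asc U U = (∑ a, U a) ^ 2 - energy U := by
  have h1 : asc U U = ∑ a, ∑ b, if b < a then U a * U b else 0 := by
    unfold asc
    rw [Finset.sum_comm]
    simp only [mul_comm]
  have h2 : energy U = ∑ a, ∑ b, if a = b then U a * U b else 0 := by
    simp [energy, pow_two]
  have h3 : (∑ a, U a) ^ 2 = ∑ a, ∑ b, U a * U b := by
    rw [pow_two, Finset.sum_mul_sum]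
  rw [two_mul]
  nth_rewrite 2 [h1]
  rw [h2, h3, eq_sub_iff_add_eq]
  unfold asc
  simp only [← Finset.sum_add_distrib]
  refine Finset.sum_congr rfl fun a _ => Finset.sum_congr rfl fun b _ => ?_
  rcases lt_trichotomy a b with h | h | h
  · simp [h, h.not_gt, h.ne]
  · simp [h]
  · simp [h, h.not_gt, h.ne']

/-- If `U` and `V` are close, `asc U V` is close to `asc U U`, which Cauchy–Schwarz bounds by
`(k - 1) / (2 * k) * M ^ 2`. The price for `U` and `V` being far apart is the last term: by the
parallelogram law it is a multiple of the energy of `V - U`, written in a form that telescopes over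
the levels of a binary tree. -/
lemma asc_le {k : ℕ} (hk : 0 < k) {M η : ℝ} (hη : 0 < η) (U V : Fin k → ℝ)
    (hU : ∀ a, 0 ≤ U a) (hM : ∑ a, U a = M) :
    asc U V ≤ M ^ 2 * (((k : ℝ) - 1) / (2 * k) + k * η)
      + 1 / (4 * η) * (2 * energy U + 2 * energy V - energy (U + V)) := by
  have hk' : (0 : ℝ) < k := by exact_mod_cast hk
  have hM0 : 0 ≤ M := hM ▸ Finset.sum_nonneg fun a _ => hU a
  have h1 : asc U V = asc U U + asc U (V - U) := by
    unfold asc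
    simp only [← Finset.sum_add_distrib]
    refine Finset.sum_congr rfl fun a _ => Finset.sum_congr rfl fun b _ => ?_
    split_ifs
    · simp only [Pi.sub_apply]; ring
    · simp
  have h2 : asc U U ≤ M ^ 2 * (((k : ℝ) - 1) / (2 * k)) := by
    have hs := asc_self U
    rw [hM] at hs
    have hcs : M ^ 2 ≤ k * energy U := by
      have := sq_sum_le_card_mul_sum_sq (s := (Finset.univ : Finset (Fin k))) (f := U)
      simpa [hM, energy] using this
    have : M ^ 2 * (((k : ℝ) - 1) / (2 * k)) = (M ^ 2 - M ^ 2 / k) / 2 := by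
      field_simp
    rw [this]
    have : M ^ 2 / k ≤ energy U := by
      rw [div_le_iff₀ hk']; linarith
    linarith
  have h3 : asc U (V - U) ≤ ∑ b, M * |(V - U) b| := by
    calc asc U (V - U) ≤ ∑ a, ∑ b, U a * |(V - U) b| := by
          refine Finset.sum_le_sum fun a _ => Finset.sum_le_sum fun b _ => ?_
          split_ifs
          · exact mul_le_mul_of_nonneg_left (le_abs_self _) (hU a)
          · exact mul_nonneg (hU a) (abs_nonneg _)
      _ = ∑ b, M * |(V - U) b| := by
          rw [← Finset.sum_mul_sum, hM, Finset.mul_sum]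
  have h4 : ∑ b, M * |(V - U) b| ≤ ∑ b : Fin k, (η * M ^ 2 + 1 / (4 * η) * (V - U) b ^ 2) := by
    refine Finset.sum_le_sum fun b _ => ?_
    rw [← sq_abs ((V - U) b)]
    set t := |(V - U) b|
    have : η * M ^ 2 + 1 / (4 * η) * t ^ 2 - M * t = (2 * η * M - t) ^ 2 / (4 * η) := by
      field_simp; ring
    have : 0 ≤ (2 * η * M - t) ^ 2 / (4 * η) := by positivity
    linarith
  have h5 : energy (V - U) = 2 * energy U + 2 * energy V - energy (U + V) := by
    unfold energy
    simp only [Finset.mul_sum, ← Finset.sum_add_distrib, ← Finset.sum_sub_distrib]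
    refine Finset.sum_congr rfl fun a _ => ?_
    simp only [Pi.sub_apply, Pi.add_apply]; ring
  have h6 : ∑ b : Fin k, (η * M ^ 2 + 1 / (4 * η) * (V - U) b ^ 2)
      = k * (η * M ^ 2) + 1 / (4 * η) * energy (V - U) := by
    simp [Finset.sum_add_distrib, energy, Finset.mul_sum]
  rw [h6, h5] at h4
  linarith

lemma sum_asc {k : ℕ} {s t : Finset ℕ} (x y : ℕ → Fin k → ℝ) :
    ∑ i ∈ s, ∑ j ∈ t, asc (x i) (y j) = asc (∑ i ∈ s, x i) (∑ j ∈ t, y j) := by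
  unfold asc
  have : ∀ i ∈ s, ∑ j ∈ t, ∑ a, ∑ b, (if a < b then x i a * y j b else 0)
      = ∑ a, ∑ b, ∑ j ∈ t, (if a < b then x i a * y j b else 0) := by
    intro i _
    rw [Finset.sum_comm]
    exact Finset.sum_congr rfl fun a _ => Finset.sum_comm
  rw [Finset.sum_congr rfl this, Finset.sum_comm]
  refine Finset.sum_congr rfl fun a _ => ?_
  rw [Finset.sum_comm]
  refine Finset.sum_congr rfl fun b _ => ?_
  split_ifs
  · simp [Finset.sum_mul_sum]
  · simp

/-- The integer weight of the pair `i < j < 2 ^ S`. In the binary tree whose leaves are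
`0, …, 2 ^ S - 1`, if the lowest common ancestor of `i` and `j` has `2 ^ t` leaves below it, the
weight is `2 ^ (S - t)`. Hence all levels `1 ≤ t ≤ S` of the tree carry the same total weight,
`4 ^ S / 4`. Pairs with `i ≥ j` in this range have weight `0`. -/
def dyadicWeight : ℕ → ℕ → ℕ → ℕ
  | 0, _, _ => 0
  | S + 1, i, j =>
    if i < 2 ^ S then if j < 2 ^ S then 2 * dyadicWeight S i j else 1
    else if j < 2 ^ S then 0 else 2 * dyadicWeight S (i - 2 ^ S) (j - 2 ^ S)

lemma dyadicWeight_lt (S : ℕ) : ∀ i j, 0 < dyadicWeight S i j → i < j := by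
  induction S with
  | zero => intro i j h; simp [dyadicWeight] at h
  | succ S ih =>
    intro i j h
    unfold dyadicWeight at h
    split_ifs at h with h1 h2 h2
    · exact ih i j (by omega)
    · omega
    · omega
    · have := ih (i - 2 ^ S) (j - 2 ^ S) (by omega)
      omega

lemma dyadicWeight_le (S : ℕ) : ∀ i j, dyadicWeight S i j ≤ 2 ^ S := by
  induction S with
  | zero => intro i j; simp [dyadicWeight]
  | succ S ih =>
    intro i j
    unfold dyadicWeight
    have := ih i j
    have := ih (i - 2 ^ S) (j - 2 ^ S)
    have : 0 < 2 ^ S := by positivity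
    rw [pow_succ]
    split_ifs <;> omega

/-- The recursion of the weights: two half-size copies with doubled weights, and weight `1` across. -/
lemma sum_dyadicWeight_succ (S : ℕ) (F : ℕ → ℕ → ℝ) :
    ∑ i ∈ range (2 ^ (S + 1)), ∑ j ∈ range (2 ^ (S + 1)), (dyadicWeight (S + 1) i j : ℝ) * F i j
      = 2 * ∑ i ∈ range (2 ^ S), ∑ j ∈ range (2 ^ S), (dyadicWeight S i j : ℝ) * F i j
      + 2 * ∑ i ∈ range (2 ^ S), ∑ j ∈ range (2 ^ S),
          (dyadicWeight S i j : ℝ) * F (2 ^ S + i) (2 ^ S + j)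
      + ∑ i ∈ range (2 ^ S), ∑ j ∈ range (2 ^ S), F i (2 ^ S + j) := by
  rw [pow_succ, mul_two]
  simp only [Finset.sum_range_add, Finset.mul_sum, ← Finset.sum_add_distrib]
  refine Finset.sum_congr rfl fun i hi => ?_
  refine Finset.sum_congr rfl fun j hj => ?_
  rw [Finset.mem_range] at hi hj
  simp [dyadicWeight, hi, hj]
  ring

lemma sum_dyadicWeight (S : ℕ) :
    ∑ i ∈ range (2 ^ S), ∑ j ∈ range (2 ^ S), (dyadicWeight S i j : ℝ) = S * 4 ^ S / 4 := by
  induction S with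
  | zero => simp [dyadicWeight]
  | succ S ih =>
    have h := sum_dyadicWeight_succ S fun _ _ => 1
    simp only [mul_one] at h
    rw [h, ih]
    simp only [sum_const, card_range, nsmul_eq_mul, mul_one]
    push_cast
    rw [← mul_pow]
    norm_num
    ring

/-- Energy increment over the binary tree: the losses caused by differing label distributions in
sibling blocks add up, over all levels, to at most `1 / (4 * η) * 4 ^ S`, whereas the total weight
is `S * 4 ^ S / 4`. -/
lemma dyadic_asc_le {k : ℕ} (hk : 0 < k) {η : ℝ} (hη : 0 < η) (S : ℕ) :
    ∀ x : ℕ → Fin k → ℝ, (∀ i < 2 ^ S, ∀ a, 0 ≤ x i a) → (∀ i < 2 ^ S, ∑ a, x i a = 1) →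
    ∑ i ∈ range (2 ^ S), ∑ j ∈ range (2 ^ S), (dyadicWeight S i j : ℝ) * asc (x i) (x j)
      ≤ S * 4 ^ S / 4 * (((k : ℝ) - 1) / (2 * k) + k * η)
        + 1 / (4 * η) * (4 ^ S - energy (∑ i ∈ range (2 ^ S), x i)) := by
  induction S with
  | zero =>
    intro x h0 h1
    have : energy (x 0) ≤ 1 := by
      have := Finset.sum_sq_le_sq_sum_of_nonneg (s := Finset.univ) (f := x 0)
        (fun a _ => h0 0 (by simp) a)
      rw [h1 0 (by simp)] at this
      simpa [energy] using this
    have : 0 ≤ 1 / (4 * η) * (1 - energy (x 0)) := mul_nonneg (by positivity) (by linarith)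
    simpa [dyadicWeight] using this
  | succ S ih =>
    intro x h0 h1
    have e2 : 2 ^ (S + 1) = 2 ^ S + 2 ^ S := by rw [pow_succ, mul_two]
    have hL := ih x (fun i hi => h0 i (by omega)) (fun i hi => h1 i (by omega))
    have hR := ih (fun i => x (2 ^ S + i)) (fun i hi => h0 _ (by omega))
      (fun i hi => h1 _ (by omega))
    rw [sum_dyadicWeight_succ S fun i j => asc (x i) (x j),
      sum_asc x fun j => x (2 ^ S + j), e2, Finset.sum_range_add]
    set U := ∑ i ∈ range (2 ^ S), x i
    set V := ∑ i ∈ range (2 ^ S), x (2 ^ S + i)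
    have hU : ∀ a, 0 ≤ U a := fun a => by
      simp only [U, Finset.sum_apply]
      exact Finset.sum_nonneg fun i hi => h0 i (by rw [Finset.mem_range] at hi; omega) a
    have hUs : ∑ a, U a = 2 ^ S := by
      simp only [U, Finset.sum_apply]
      rw [Finset.sum_comm, Finset.sum_congr rfl fun i hi =>
        h1 i (by rw [Finset.mem_range] at hi; omega)]
      simp
    have hmid := asc_le hk hη U V hU hUs
    have e4 : ((2 : ℝ) ^ S) ^ 2 = 4 ^ S := by rw [← pow_mul, mul_comm, pow_mul]; norm_num
    rw [e4] at hmid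
    push_cast
    rw [pow_succ]
    linarith

/-! ### Point–line incidence graphs -/

/-- The point–line incidence relation in the affine plane over `ZMod p`, shifted by `c`: the point
`x` lies on the line with slope `y.1` and intercept `y.2 - c`. The `p` shifts partition all pairs
`(x, y)` into `p` quasirandom bipartite graphs, each of degree `p`. -/
def Inc {p : ℕ} (c : ZMod p) (x y : ZMod p × ZMod p) : Prop := x.1 * y.1 + y.2 - x.2 = c

instance {p : ℕ} (c : ZMod p) (x y : ZMod p × ZMod p) : Decidable (Inc c x y) := by
  unfold Inc; infer_instance

lemma card_inc {p : ℕ} [Fact p.Prime] (c : ZMod p) (x : ZMod p × ZMod p) :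
    #{y | Inc c x y} = p := by
  have : ({y | Inc c x y} : Finset (ZMod p × ZMod p))
      = univ.image fun t : ZMod p => (t, c + x.2 - x.1 * t) := by
    ext ⟨y1, y2⟩
    simp only [mem_filter, mem_univ, true_and, mem_image, Prod.mk.injEq]
    unfold Inc
    constructor
    · intro h; exact ⟨y1, rfl, by rw [← h]; ring⟩
    · rintro ⟨t, rfl, rfl⟩; ring
  rw [this, card_image_of_injective _ (fun a b h => (Prod.mk.inj h).1), card_univ, ZMod.card]

lemma card_inc_inc {p : ℕ} [Fact p.Prime] (c : ZMod p) {x x' : ZMod p × ZMod p} (hx : x ≠ x') :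
    #{y | Inc c x y ∧ Inc c x' y} ≤ 1 := by
  rw [card_le_one]
  intro y hy z hz
  simp only [mem_filter, mem_univ, true_and] at hy hz
  unfold Inc at hy hz
  have h : (x.1 - x'.1) * (y.1 - z.1) = 0 := by linear_combination hy.1 - hy.2 - hz.1 + hz.2
  rcases mul_eq_zero.1 h with h | h
  · refine absurd (Prod.ext (sub_eq_zero.1 h) ?_) hx
    linear_combination hy.2 - hy.1 + h * y.1
  · refine Prod.ext (sub_eq_zero.1 h) ?_
    linear_combination hy.1 - hz.1 - x.1 * h

/-- Quasirandomness of the incidence graph, by the second moment of the number of neighbours in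
`A`: two distinct points lie on at most one common line. The main term has order `p ^ 3` for large
`A` and `B`. -/
lemma inc_le {p : ℕ} [Fact p.Prime] (c : ZMod p) (A B : Finset (ZMod p × ZMod p)) :
    ∑ x ∈ A, ∑ y ∈ B, (if Inc c x y then (1 : ℝ) else 0)
      ≤ (#A : ℝ) * #B / p + p ^ 2 * √p := by
  have hp : (0 : ℝ) < p := by exact_mod_cast (Fact.out : p.Prime).pos
  -- `N y` is the number of neighbours of `y` in `A`.
  set N : ZMod p × ZMod p → ℝ := fun y => ∑ x ∈ A, (if Inc c x y then (1 : ℝ) else 0) with hN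
  have hcardV : (#(univ : Finset (ZMod p × ZMod p)) : ℝ) = p ^ 2 := by
    simp [ZMod.card, pow_two]
  have s1 : ∑ y, N y = #A * p := by
    simp only [hN]
    rw [sum_comm]
    simp only [sum_boole, card_inc, sum_const, nsmul_eq_mul]
  have s2 : ∑ y, N y ^ 2 ≤ #A * p + (#A : ℝ) ^ 2 := by
    calc ∑ y, N y ^ 2
        = ∑ x ∈ A, ∑ x' ∈ A, ∑ y, (if Inc c x y ∧ Inc c x' y then (1 : ℝ) else 0) := by
          simp only [hN, pow_two, sum_mul_sum]
          rw [sum_comm]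
          refine sum_congr rfl fun x _ => ?_
          rw [sum_comm]
          refine sum_congr rfl fun x' _ => sum_congr rfl fun y _ => ?_
          by_cases h : Inc c x y <;> by_cases h' : Inc c x' y <;> simp [h, h']
      _ ≤ ∑ x ∈ A, ∑ x' ∈ A, ((if x = x' then (p : ℝ) else 0) + 1) := by
          refine sum_le_sum fun x _ => sum_le_sum fun x' _ => ?_
          rw [sum_boole]
          by_cases h : x = x'
          · subst h
            simp [card_inc]
          · simp only [h, if_false, zero_add]
            exact_mod_cast card_inc_inc c h
      _ = #A * p + (#A : ℝ) ^ 2 := by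
          simp only [sum_add_distrib, sum_ite_eq, sum_const, nsmul_eq_mul, mul_one]
          rw [sum_congr rfl fun x hx => if_pos hx]
          simp [pow_two]
  have hA : (#A : ℝ) ≤ p ^ 2 := by
    rw [← hcardV]; exact_mod_cast card_le_univ A
  have s3 : ∑ y, (N y - #A / p) ^ 2 ≤ p ^ 3 := by
    have : ∑ y, (N y - #A / p) ^ 2
        = ∑ y, N y ^ 2 - 2 * (#A / p) * ∑ y, N y + p ^ 2 * (#A / p) ^ 2 := by
      rw [← hcardV, ← nsmul_eq_mul, ← sum_const, mul_sum, ← sum_sub_distrib, ← sum_add_distrib]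
      exact sum_congr rfl fun y _ => by ring
    rw [this, s1]
    have e : 2 * (#A / p : ℝ) * (#A * p) = 2 * (#A : ℝ) ^ 2 := by field_simp
    have e' : (p : ℝ) ^ 2 * (#A / p) ^ 2 = (#A : ℝ) ^ 2 := by field_simp
    rw [e, e']
    nlinarith
  have hsp : 0 < √(p : ℝ) := Real.sqrt_pos.2 hp
  have hsq : √(p : ℝ) ^ 2 = p := Real.sq_sqrt hp.le
  have s4 : ∑ y ∈ B, (N y - #A / p) ≤ p ^ 2 * √p := by
    calc ∑ y ∈ B, (N y - #A / p)
        ≤ ∑ y ∈ B, (√p / 2 + 1 / (2 * √p) * (N y - #A / p) ^ 2) := by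
          refine sum_le_sum fun y _ => ?_
          set t := N y - #A / p
          have : √(p : ℝ) / 2 + 1 / (2 * √p) * t ^ 2 - t = (√p - t) ^ 2 / (2 * √p) := by
            field_simp; ring
          have : 0 ≤ (√(p : ℝ) - t) ^ 2 / (2 * √p) := by positivity
          linarith
      _ ≤ ∑ y, (√p / 2 + 1 / (2 * √p) * (N y - #A / p) ^ 2) :=
          sum_le_sum_of_subset_of_nonneg (subset_univ _) fun y _ _ => by positivity
      _ = p ^ 2 * (√p / 2) + 1 / (2 * √p) * ∑ y, (N y - #A / p) ^ 2 := by
          rw [sum_add_distrib, sum_const, nsmul_eq_mul, hcardV, mul_sum]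
      _ ≤ p ^ 2 * (√p / 2) + 1 / (2 * √p) * p ^ 3 := by gcongr
      _ = p ^ 2 * √p := by
          have : (p : ℝ) ^ 3 = p ^ 2 * √p ^ 2 := by rw [hsq]; ring
          rw [this]; field_simp; ring
  rw [sum_comm]
  rw [sum_sub_distrib, sum_const, nsmul_eq_mul] at s4
  have : (#A : ℝ) * #B / p = #B * (#A / p) := by ring
  rw [this]
  linarith

/-- The bipartite graph of density `w / p` is the edge-disjoint union of `w` incidence graphs. -/
lemma sum_val_lt {p : ℕ} [Fact p.Prime] {w : ℕ} (hw : w ≤ p) (x y : ZMod p × ZMod p) :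
    (if (x.1 * y.1 + y.2 - x.2).val < w then (1 : ℝ) else 0)
      = ∑ c ∈ range w, if Inc (c : ZMod p) x y then (1 : ℝ) else 0 := by
  set z := x.1 * y.1 + y.2 - x.2 with hz
  have : ∀ c ∈ range w, (if Inc (c : ZMod p) x y then (1 : ℝ) else 0)
      = if c = z.val then 1 else 0 := by
    intro c hc
    have hc := mem_range.1 hc
    have : Inc (c : ZMod p) x y ↔ c = z.val := by
      unfold Inc
      rw [← hz]
      constructor
      · intro h; rw [h, ZMod.val_cast_of_lt (by omega)]
      · intro h; rw [h, ZMod.natCast_zmod_val]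
    simp [this]
  rw [sum_congr rfl this, sum_ite_eq']
  simp

lemma sum_val_lt_univ {p : ℕ} [Fact p.Prime] {w : ℕ} (hw : w ≤ p) :
    ∑ x : ZMod p × ZMod p, ∑ y : ZMod p × ZMod p,
      (if (x.1 * y.1 + y.2 - x.2).val < w then (1 : ℝ) else 0) = w * p ^ 3 := by
  simp only [sum_val_lt hw]
  rw [sum_congr rfl fun x _ => sum_comm]
  simp only [sum_boole, card_inc]
  simp [ZMod.card]
  ring

lemma sum_val_lt_le {p : ℕ} [Fact p.Prime] {w : ℕ} (hw : w ≤ p)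
    (A B : Finset (ZMod p × ZMod p)) :
    ∑ x ∈ A, ∑ y ∈ B, (if (x.1 * y.1 + y.2 - x.2).val < w then (1 : ℝ) else 0)
      ≤ w * ((#A : ℝ) * #B / p + p ^ 2 * √p) := by
  simp only [sum_val_lt hw]
  rw [sum_congr rfl fun x _ => sum_comm, sum_comm]
  calc _ ≤ ∑ _c ∈ range w, ((#A : ℝ) * #B / p + p ^ 2 * √p) :=
        sum_le_sum fun c _ => inc_le (c : ZMod p) A B
    _ = _ := by rw [sum_const, card_range, nsmul_eq_mul]

/-! ### The blow-up and the upper bound -/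

/-- With enough levels, the dyadically weighted complete graph has no fractional labelling whose
increasing weight beats the proportion `(k - 1) / (2 * k)` by more than `ε`. -/
lemma exists_dyadic {k : ℕ} (hk : 0 < k) {ε : ℝ} (hε : 0 < ε) :
    ∃ S : ℕ, 0 < S ∧ ∀ x : ℕ → Fin k → ℝ, (∀ i < 2 ^ S, ∀ a, 0 ≤ x i a) →
      (∀ i < 2 ^ S, ∑ a, x i a = 1) →
      ∑ i ∈ range (2 ^ S), ∑ j ∈ range (2 ^ S), (dyadicWeight S i j : ℝ) * asc (x i) (x j)
        ≤ S * 4 ^ S / 4 * (((k : ℝ) - 1) / (2 * k) + ε) := by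
  have hk' : (0 : ℝ) < k := by exact_mod_cast hk
  set η : ℝ := ε / (2 * k) with hη_def
  have hη : 0 < η := by positivity
  obtain ⟨S, hS⟩ := exists_nat_gt (2 / (η * ε))
  have hS0 : (0 : ℝ) < S := lt_trans (by positivity) hS
  refine ⟨S, by exact_mod_cast hS0, fun x h0 h1 => (dyadic_asc_le hk hη S x h0 h1).trans ?_⟩
  have hE : 0 ≤ energy (∑ i ∈ range (2 ^ S), x i) := sum_nonneg fun a _ => sq_nonneg _
  have hkη : k * η = ε / 2 := by rw [hη_def]; field_simp
  have hD : 1 / (4 * η) ≤ S / 4 * (ε / 2) := by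
    rw [div_lt_iff₀ (by positivity)] at hS
    rw [div_le_iff₀ (by positivity)]
    linarith
  have h4 : (0 : ℝ) < 4 ^ S := by positivity
  have : 1 / (4 * η) * (4 ^ S - energy (∑ i ∈ range (2 ^ S), x i))
      ≤ S / 4 * (ε / 2) * 4 ^ S :=
    (mul_le_mul_of_nonneg_left (sub_le_self _ hE) (by positivity)).trans
      (mul_le_mul_of_nonneg_right hD h4.le)
  rw [hkη]
  linarith

/-- The ordered graph on `2 ^ S` consecutive clusters, each a copy of the affine plane over
`ZMod p`, where clusters `i < j` are joined by a bipartite graph of density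
`dyadicWeight S i j / p` and there are no edges inside clusters. The equivalence `E` sends a vertex
to its cluster and its point. -/
lemma exists_blowup (S p : ℕ) [Fact p.Prime] :
    ∃ (G : SimpleGraph (Fin (2 ^ S * (p * p))))
      (E : Fin (2 ^ S * (p * p)) ≃ Fin (2 ^ S) × (ZMod p × ZMod p)),
      ∀ u v, (u < v ∧ G.Adj u v) ↔
        ((E u).2.1 * (E v).2.1 + (E v).2.2 - (E u).2.2).val
          < dyadicWeight S (E u).1 (E v).1 := by
  have σ : Fin (p * p) ≃ ZMod p × ZMod p := Fintype.equivOfCardEq (by simp [ZMod.card])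
  set E : Fin (2 ^ S * (p * p)) ≃ Fin (2 ^ S) × (ZMod p × ZMod p) :=
    finProdFinEquiv.symm.trans ((Equiv.refl _).prodCongr σ) with hE
  set R : Fin (2 ^ S * (p * p)) → Fin (2 ^ S * (p * p)) → Prop := fun u v =>
    ((E u).2.1 * (E v).2.1 + (E v).2.2 - (E u).2.2).val < dyadicWeight S (E u).1 (E v).1 with hR
  -- Only pairs of clusters in increasing order have positive weight, and `E` respects the order of
  -- the clusters, so `R` orients every edge upwards.
  have hlt : ∀ u v, R u v → u < v := by
    intro u v h
    have h1 : ((E u).1 : ℕ) < (E v).1 := dyadicWeight_lt S _ _ (Nat.zero_lt_of_lt h)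
    have h2 : ∀ u, ((E u).1 : ℕ) = u / (p * p) := fun u => by
      simp [hE, finProdFinEquiv, Fin.divNat]
    rw [h2, h2] at h1
    by_contra hn
    exact absurd h1 (not_lt.2 (Nat.div_le_div_right (not_lt.1 hn)))
  refine ⟨SimpleGraph.fromRel R, E, fun u v => ?_⟩
  rw [SimpleGraph.fromRel_adj]
  constructor
  · rintro ⟨huv, -, h | h⟩
    · exact h
    · exact absurd (hlt _ _ h) huv.not_gt
  · intro h
    exact ⟨hlt _ _ h, (hlt _ _ h).ne, Or.inl h⟩

/-- Between two clusters, the number of edges with increasing labels is governed by the label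
distributions of the clusters, up to a relative error `k ^ 2 / √p`. -/
lemma sum_label_le {p k w : ℕ} [Fact p.Prime] (hw : w ≤ p)
    (f g : ZMod p × ZMod p → Fin k) :
    ∑ x, ∑ y, (if (x.1 * y.1 + y.2 - x.2).val < w ∧ f x < g y then (1 : ℝ) else 0)
      ≤ w * p ^ 3 * (asc (fun a => (#{x | f x = a} : ℝ) / p ^ 2)
          (fun b => (#{y | g y = b} : ℝ) / p ^ 2) + k ^ 2 / √p) := by
  have hp : (0 : ℝ) < p := by exact_mod_cast (Fact.out : p.Prime).pos
  have hsp : 0 < √(p : ℝ) := Real.sqrt_pos.2 hp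
  have hsq : √(p : ℝ) ^ 2 = p := Real.sq_sqrt hp.le
  set A : Fin k → Finset (ZMod p × ZMod p) := fun a => {x | f x = a} with hA
  set B : Fin k → Finset (ZMod p × ZMod p) := fun b => {y | g y = b} with hB
  set P : ZMod p × ZMod p → ZMod p × ZMod p → ℝ := fun x y =>
    if (x.1 * y.1 + y.2 - x.2).val < w then (1 : ℝ) else 0 with hP
  have split : ∑ x, ∑ y, (if (x.1 * y.1 + y.2 - x.2).val < w ∧ f x < g y then (1 : ℝ) else 0)
      = ∑ a, ∑ b, if a < b then ∑ x ∈ A a, ∑ y ∈ B b, P x y else 0 := by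
    rw [← sum_fiberwise (M := ℝ) (s := univ) (g := f)]
    refine sum_congr rfl fun a _ => ?_
    have : ∀ b : Fin k, (if a < b then ∑ x ∈ A a, ∑ y ∈ B b, P x y else 0)
        = ∑ x ∈ A a, ∑ y ∈ B b, if a < b then P x y else 0 := by
      intro b; split_ifs <;> simp
    rw [sum_congr rfl fun b _ => this b]
    conv_rhs => rw [sum_comm]
    refine sum_congr rfl fun x hx => ?_
    rw [← sum_fiberwise (M := ℝ) (s := univ) (g := g)]
    refine sum_congr rfl fun b _ => sum_congr rfl fun y hy => ?_
    have hx : f x = a := (mem_filter.1 hx).2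
    have hy : g y = b := (mem_filter.1 hy).2
    simp only [hP, hx, hy]
    by_cases h : a < b <;> simp [h]
  rw [split]
  have hterm : ∀ a b : Fin k, (if a < b then ∑ x ∈ A a, ∑ y ∈ B b, P x y else 0)
      ≤ w * p ^ 3 * (if a < b then ((#(A a) : ℝ) / p ^ 2) * ((#(B b) : ℝ) / p ^ 2) else 0)
        + w * p ^ 3 * (1 / √p) := by
    intro a b
    split_ifs
    · refine (sum_val_lt_le hw (A a) (B b)).trans (le_of_eq ?_)
      have e3 : (p : ℝ) ^ 3 * (1 / √p) = p ^ 2 * √p := by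
        field_simp; rw [hsq]
      have e4 : (p : ℝ) ^ 3 * ((#(A a) : ℝ) / p ^ 2 * ((#(B b) : ℝ) / p ^ 2))
          = (#(A a) : ℝ) * #(B b) / p := by field_simp
      rw [mul_assoc, mul_assoc, e3, e4, mul_add]
    · positivity
  refine (sum_le_sum fun a _ => sum_le_sum fun b _ => hterm a b).trans (le_of_eq ?_)
  simp only [sum_add_distrib, ← mul_sum, sum_const, card_univ, Fintype.card_fin, nsmul_eq_mul, asc]
  ring

/-- Optimality: blowing up the weighted complete graph into incidence graphs turns fractional
labellings into labellings of an honest simple graph. -/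
lemma exists_graph {k : ℕ} (hk : 0 < k) {ε : ℝ} (hε : 0 < ε) :
    ∃ (n : ℕ) (G : SimpleGraph (Fin n)), 0 < eCount G ∧
      ∀ G' ≤ G, OFree (ascPath k) G' →
        (eCount G' : ℝ) ≤ (((k : ℝ) - 1) / (2 * k) + ε) * eCount G := by
  classical
  obtain ⟨S, hS, hx⟩ := exists_dyadic hk (half_pos hε)
  obtain ⟨m, hm⟩ := exists_nat_ge ((2 * (k : ℝ) ^ 2 / ε) ^ 2)
  obtain ⟨p, hpm, hprime⟩ := Nat.exists_infinite_primes (max (2 ^ S) m)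
  have : Fact p.Prime := ⟨hprime⟩
  have hp : (0 : ℝ) < p := by exact_mod_cast hprime.pos
  have hw : ∀ i j, dyadicWeight S i j ≤ p := fun i j =>
    (dyadicWeight_le S i j).trans ((le_max_left _ _).trans hpm)
  have herr : (k : ℝ) ^ 2 / √p ≤ ε / 2 := by
    have h1 : 2 * (k : ℝ) ^ 2 / ε ≤ √p := by
      refine Real.le_sqrt_of_sq_le (hm.trans ?_)
      exact_mod_cast (le_max_right _ _).trans hpm
    rw [div_le_iff₀ hε] at h1
    rw [div_le_iff₀ (Real.sqrt_pos.2 hp)]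
    linarith
  obtain ⟨G, E, hGE⟩ := exists_blowup S p
  have reindex : ∀ Φ : Fin (2 ^ S) × (ZMod p × ZMod p) → Fin (2 ^ S) × (ZMod p × ZMod p) → ℝ,
      ∑ u, ∑ v, Φ (E u) (E v) = ∑ i, ∑ j, ∑ x, ∑ y, Φ (i, x) (j, y) := by
    intro Φ
    rw [E.sum_comp (fun s => ∑ v, Φ s (E v) : _ → ℝ), Fintype.sum_prod_type]
    refine sum_congr rfl fun i _ => ?_
    conv_rhs => rw [sum_comm]
    refine sum_congr rfl fun x _ => ?_
    rw [E.sum_comp (fun t => Φ (i, x) t : _ → ℝ), Fintype.sum_prod_type]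
  have htot : (eCount G : ℝ) = p ^ 3 * (S * 4 ^ S / 4) := by
    rw [eCount_eq_sum]
    simp only [hGE]
    rw [reindex fun s t => if (s.2.1 * t.2.1 + t.2.2 - s.2.2).val < dyadicWeight S s.1 t.1
      then (1 : ℝ) else 0]
    simp only [sum_val_lt_univ (hw _ _)]
    rw [← sum_dyadicWeight, mul_sum, Fin.sum_univ_eq_sum_range
      (fun i => ∑ j : Fin (2 ^ S), (dyadicWeight S i j : ℝ) * p ^ 3)]
    refine sum_congr rfl fun i _ => ?_
    rw [mul_sum, Fin.sum_univ_eq_sum_range (fun j => (dyadicWeight S i j : ℝ) * p ^ 3)]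
    exact sum_congr rfl fun j _ => mul_comm _ _
  refine ⟨_, G, ?_, fun G' hG' hfree => ?_⟩
  · have : (0 : ℝ) < eCount G := by rw [htot]; positivity
    exact_mod_cast this
  obtain ⟨f, hf⟩ := hfree.exists_label hk
  -- `F i x` is the label of the point `x` of cluster `i` and `X i` the label distribution there;
  -- values for `i ≥ 2 ^ S` are irrelevant.
  set F : ℕ → ZMod p × ZMod p → Fin k := fun i x =>
    if h : i < 2 ^ S then f (E.symm (⟨i, h⟩, x)) else ⟨0, hk⟩ with hF
  have hFE : ∀ u, F (E u).1 (E u).2 = f u := fun u => by simp [hF]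
  set X : ℕ → Fin k → ℝ := fun i a => (#{x | F i x = a} : ℝ) / p ^ 2 with hX
  have hX1 : ∀ i, ∑ a, X i a = 1 := by
    intro i
    have := card_eq_sum_card_fiberwise (s := univ) (t := univ) (f := F i)
      (fun _ _ => by simp)
    have h2 : (∑ a, (#{x | F i x = a} : ℝ)) = p ^ 2 := by
      rw [← Nat.cast_sum, ← this]
      simp [ZMod.card, pow_two]
    simp only [hX, ← sum_div, h2]
    field_simp
  have hbound := hx X (fun i _ a => by positivity) (fun i _ => hX1 i)
  calc (eCount G' : ℝ)
      = ∑ u, ∑ v, if u < v ∧ G'.Adj u v then (1 : ℝ) else 0 := eCount_eq_sum G'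
    _ ≤ ∑ u, ∑ v, if (u < v ∧ G.Adj u v) ∧ F (E u).1 (E u).2 < F (E v).1 (E v).2
          then (1 : ℝ) else 0 := by
        refine sum_le_sum fun u _ => sum_le_sum fun v _ => ?_
        by_cases h : u < v ∧ G'.Adj u v
        · rw [if_pos h, if_pos ⟨⟨h.1, hG' h.2⟩, by rw [hFE, hFE]; exact hf u v h.1 h.2⟩]
        · rw [if_neg h]; split_ifs <;> norm_num
    _ = ∑ i : Fin (2 ^ S), ∑ j : Fin (2 ^ S), ∑ x, ∑ y,
          (if (x.1 * y.1 + y.2 - x.2).val < dyadicWeight S i j ∧ F i x < F j y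
            then (1 : ℝ) else 0) := by
        simp only [hGE]
        rw [reindex fun s t => if (s.2.1 * t.2.1 + t.2.2 - s.2.2).val
          < dyadicWeight S s.1 t.1 ∧ F s.1 s.2 < F t.1 t.2 then 1 else 0]
    _ ≤ ∑ i : Fin (2 ^ S), ∑ j : Fin (2 ^ S),
          (dyadicWeight S i j : ℝ) * p ^ 3 * (asc (X i) (X j) + k ^ 2 / √p) :=
        sum_le_sum fun i _ => sum_le_sum fun j _ => sum_label_le (hw _ _) (F i) (F j)
    _ = ∑ i ∈ range (2 ^ S), ∑ j ∈ range (2 ^ S),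
          (dyadicWeight S i j : ℝ) * p ^ 3 * (asc (X i) (X j) + k ^ 2 / √p) := by
        rw [← Fin.sum_univ_eq_sum_range (fun i => ∑ j ∈ range (2 ^ S),
          (dyadicWeight S i j : ℝ) * p ^ 3 * (asc (X i) (X j) + k ^ 2 / √p))]
        refine sum_congr rfl fun i _ => ?_
        rw [← Fin.sum_univ_eq_sum_range (fun j =>
          (dyadicWeight S i j : ℝ) * p ^ 3 * (asc (X i) (X j) + k ^ 2 / √p))]
    _ = p ^ 3 * (∑ i ∈ range (2 ^ S), ∑ j ∈ range (2 ^ S),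
            (dyadicWeight S i j : ℝ) * asc (X i) (X j))
          + p ^ 3 * (∑ i ∈ range (2 ^ S), ∑ j ∈ range (2 ^ S), (dyadicWeight S i j : ℝ))
            * (k ^ 2 / √p) := by
        simp only [mul_sum, sum_mul, ← sum_add_distrib]
        exact sum_congr rfl fun i _ => sum_congr rfl fun j _ => by ring
    _ ≤ p ^ 3 * (S * 4 ^ S / 4 * (((k : ℝ) - 1) / (2 * k) + ε / 2))
          + p ^ 3 * (S * 4 ^ S / 4) * (ε / 2) := by
        rw [sum_dyadicWeight]
        gcongr
    _ = (((k : ℝ) - 1) / (2 * k) + ε) * eCount G := by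
        rw [htot]; ring

theorem relTuran_ascPath (k : ℕ) (hk : 2 ≤ k) :
    relTuran (ascPath k) = ((k : ℝ) - 1) / (2 * k) := by
  have hk0 : 0 < k := by omega
  have hk' : (2 : ℝ) ≤ k := by exact_mod_cast hk
  refine IsGreatest.csSup_eq ⟨⟨⟨?_, ?_⟩, fun n G => exists_subgraph hk0 G⟩, ?_⟩
  · exact div_nonneg (by linarith) (by linarith)
  · rw [div_le_one (by linarith)]; linarith
  · rintro ς ⟨-, hς⟩
    refine le_of_forall_pos_le_add fun ε hε => ?_
    obtain ⟨n, G, hpos, hG⟩ := exists_graph hk0 hε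
    obtain ⟨G', hle, hfree, hcount⟩ := hς n G
    exact le_of_mul_le_mul_right (hcount.trans (hG G' hle hfree)) (by exact_mod_cast hpos)
end

section
/- For every integer k ≥ 2, every ordered graph G has a subgraph G' containing no ascending path with k edges (i.e., G' is P_k-free) such that 2k·e(G') ≥ (k−1)·e(G). -/
/-- The subgraph of `G` consisting of the edges along which the labelling `f` is strictly
increasing from the smaller to the larger endpoint. -/
def labelGraph {n k : ℕ} (G : SimpleGraph (Fin n)) (f : Fin n → Fin k) :
    SimpleGraph (Fin n) where
  Adj a b := G.Adj a b ∧ (a < b ∧ f a < f b ∨ b < a ∧ f b < f a)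
  symm := ⟨fun _ _ h => ⟨h.1.symm, h.2.symm⟩⟩
  loopless := ⟨fun _ h => G.irrefl h.1⟩

theorem oFree_labelGraph {n k : ℕ} (G : SimpleGraph (Fin n)) (f : Fin n → Fin k) :
    OFree (ascPath k) (labelGraph G f) := by
  rintro ⟨g, hg, hadj⟩
  have hmono : StrictMono (f ∘ g) := by
    rw [Fin.strictMono_iff_lt_succ]
    intro i
    have hlt : i.castSucc < i.succ := Fin.castSucc_lt_succ
    have h : (ascPath k).Adj i.castSucc i.succ := by
      simp [ascPath, SimpleGraph.fromRel_adj, hlt.ne]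
    rcases (hadj _ _ h).2 with h | h
    · exact h.2
    · exact absurd h.1 (hg hlt).not_gt
  simpa using Fintype.card_le_of_injective _ hmono.injective

open Classical in
theorem eCount_eq_card {n : ℕ} (G : SimpleGraph (Fin n)) :
    eCount G =
      (Finset.univ.filter fun p : Fin n × Fin n => p.1 < p.2 ∧ G.Adj p.1 p.2).card := by
  rw [eCount, ← Set.ncard_coe_finset]
  symm
  refine Set.ncard_congr (fun p _ => s(p.1, p.2)) ?_ ?_ ?_
  · intro p hp
    simp at hp
    simpa using hp.2
  · rintro ⟨a, b⟩ ⟨c, d⟩ hp hq h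
    simp at hp hq h
    rcases h with h | h
    · simp [h]
    · obtain ⟨rfl, rfl⟩ := h
      exact absurd hp.1 hq.1.not_gt
  · intro e he
    induction e using Sym2.ind with
    | _ a b =>
      have hab : G.Adj a b := by simpa using he
      rcases lt_or_gt_of_ne hab.ne with h | h
      · exact ⟨(a, b), by simp [h, hab], rfl⟩
      · exact ⟨(b, a), by simp [h, hab.symm], Sym2.eq_swap⟩

/-- A random labelling is strictly increasing on a given pair of distinct vertices with
probability at least `(k - 1) / (2k)`. -/
theorem card_labelings_lt {n k : ℕ} {a b : Fin n} (hab : a ≠ b) :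
    (k - 1) * Fintype.card (Fin n → Fin k) ≤
      2 * k * (Finset.univ.filter fun f : Fin n → Fin k => f a < f b).card := by
  set L := Finset.univ.filter fun f : Fin n → Fin k => f a < f b with hL
  set R := Finset.univ.filter fun f : Fin n → Fin k => f b < f a with hR
  set E := Finset.univ.filter fun f : Fin n → Fin k => f a = f b with hE
  -- Exchanging the labels of `a` and `b` is an involution between the two strict cases.
  have hRL : R.card ≤ L.card := by
    refine Finset.card_le_card_of_injOn (fun f => f ∘ Equiv.swap a b) ?_ ?_
    · intro f hf
      simp [hR] at hf
      simpa [hL] using hf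
    · intro f _ g _ h
      exact (Equiv.swap a b).surjective.injective_comp_right h
  -- Relabelling `a` arbitrarily loses nothing when `f a = f b`: the old label is still at `b`.
  have hEk : E.card * k ≤ Fintype.card (Fin n → Fin k) := by
    have h := Finset.card_le_card_of_injOn (s := E ×ˢ (Finset.univ : Finset (Fin k)))
      (t := (Finset.univ : Finset (Fin n → Fin k)))
      (fun p => Function.update p.1 a p.2) (fun _ _ => by simp) (by
        rintro ⟨f, c⟩ hf ⟨g, d⟩ hg h
        simp [hE] at hf hg h
        have hfg : ∀ x, x ≠ a → f x = g x := fun x hx => by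
          simpa [hx] using congrFun h x
        have hcd : c = d := by simpa using congrFun h a
        refine Prod.ext (funext fun x => ?_) hcd
        by_cases hx : x = a
        · subst hx
          exact hf.trans ((hfg b hab.symm).trans hg.symm)
        · exact hfg x hx)
    simpa [Finset.card_product] using h
  have htot : Fintype.card (Fin n → Fin k) ≤ L.card + R.card + E.card := by
    rw [← Finset.card_univ]
    have : (Finset.univ : Finset (Fin n → Fin k)) ⊆ L ∪ R ∪ E := by
      intro f _
      rcases lt_trichotomy (f a) (f b) with h | h | h <;> simp [hL, hR, hE, h]
    refine (Finset.card_le_card this).trans ((Finset.card_union_le _ _).trans ?_)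
    gcongr
    exact Finset.card_union_le _ _
  generalize Fintype.card (Fin n → Fin k) = N at *
  rcases k with _ | k
  · simp
  · simp only [Nat.add_sub_cancel]
    nlinarith

theorem exists_ascPath_free_subgraph (k : ℕ) (hk : 2 ≤ k) {n : ℕ} (G : SimpleGraph (Fin n)) :
    ∃ G' ≤ G, OFree (ascPath k) G' ∧ (k - 1) * eCount G ≤ 2 * k * eCount G' := by
  classical
  have : Nonempty (Fin k) := ⟨⟨0, by omega⟩⟩
  set P := Finset.univ.filter fun p : Fin n × Fin n => p.1 < p.2 ∧ G.Adj p.1 p.2 with hP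
  have hcount : ∀ f : Fin n → Fin k,
      eCount (labelGraph G f) = (P.filter fun p => f p.1 < f p.2).card := by
    intro f
    rw [eCount_eq_card, hP, Finset.filter_filter]
    congr 1
    ext p
    simp only [Finset.mem_filter, Finset.mem_univ, true_and]
    constructor
    · rintro ⟨h, hG, h' | h'⟩
      · exact ⟨⟨h, hG⟩, h'.2⟩
      · exact absurd h'.1 h.not_gt
    · rintro ⟨⟨h, hG⟩, hf⟩
      exact ⟨h, hG, Or.inl ⟨h, hf⟩⟩
  have hdouble : ∑ f : Fin n → Fin k, eCount (labelGraph G f) =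
      ∑ p ∈ P, (Finset.univ.filter fun f : Fin n → Fin k => f p.1 < f p.2).card := by
    simp only [hcount, Finset.card_filter]
    exact Finset.sum_comm
  have hsum : ∑ _f : Fin n → Fin k, (k - 1) * eCount G ≤
      ∑ f : Fin n → Fin k, 2 * k * eCount (labelGraph G f) := by
    rw [Finset.sum_const, ← Finset.mul_sum, hdouble, Finset.mul_sum, Finset.card_univ,
      eCount_eq_card G, ← hP, smul_eq_mul]
    calc Fintype.card (Fin n → Fin k) * ((k - 1) * P.card)
        = ∑ _p ∈ P, (k - 1) * Fintype.card (Fin n → Fin k) := by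
          rw [Finset.sum_const, smul_eq_mul]; ring
      _ ≤ _ := Finset.sum_le_sum fun p hp =>
          card_labelings_lt (by simp [hP] at hp; exact hp.1.ne)
  obtain ⟨f, -, hf⟩ := Finset.exists_le_of_sum_le Finset.univ_nonempty hsum
  exact ⟨labelGraph G f, fun _ _ h => h.1, oFree_labelGraph G f, hf⟩
end

section
/- Let k ≥ 1 and d ≥ 1 be integers and suppose α, β, γ ∈ Δ_k satisfy 2α = β + γ. Then h_{d−1}(β) + h_{d−1}(γ) + 4·∑_{1 ≤ i < j ≤ k} β_i·γ_j ≤ 2·h_d(α). -/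
/-!
Put `δ = β - γ` and `c i = ∑_{j > i} β j - ∑_{j < i} β j`. Substituting `α = (β + γ) / 2` and
writing `2 = 2 (∑ β) (∑ γ)`, the difference of the two sides becomes
`∑ i, ((d / 2) (δ i)² - 2 δ i c i + 2 / d)`; here `∑ i, β i * c i = 0` by antisymmetry.
Since `|c i| ≤ ∑ j, β j = 1`, every summand is nonnegative by the AM-GM inequality
(`quad_nonneg`). The two sums are rearranged with `sum_Ioi_swap`.
-/

/-- Membership in the standard simplex `Δ_k = {α ∈ [0,1]^k : α₁ + … + α_k = 1}`. -/
def memSimplex {k : ℕ} (α : Fin k → ℝ) : Prop :=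
  (∀ i, α i ∈ Set.Icc (0 : ℝ) 1) ∧ ∑ i, α i = 1

/-- The function `h_d(α) = (d+2)(1 - ‖α‖²) + k·∑_{r=1}^d 1/r`, where `‖α‖` is the
Euclidean norm, i.e. `‖α‖² = ∑ i, (α i)²`. -/
noncomputable def hfun (k d : ℕ) (α : Fin k → ℝ) : ℝ :=
  ((d : ℝ) + 2) * (1 - ∑ i, (α i) ^ 2) + (k : ℝ) * ∑ r ∈ Finset.Icc 1 d, (1 : ℝ) / r

theorem sum_Ioi_swap {k : ℕ} (f : Fin k → Fin k → ℝ) :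
    ∑ i, ∑ j ∈ Finset.Ioi i, f i j = ∑ i, ∑ j ∈ Finset.Iio i, f j i := by
  apply Finset.sum_comm'
  simp

theorem sum_Iio_add_self_add_sum_Ioi {k : ℕ} (f : Fin k → ℝ) (i : Fin k) :
    ∑ j ∈ Finset.Iio i, f j + f i + ∑ j ∈ Finset.Ioi i, f j = ∑ j, f j := by
  have h := Finset.sum_filter_add_sum_filter_not Finset.univ (fun j => j ≤ i) f
  have h1 : Finset.univ.filter (fun j => j ≤ i) = Finset.Iic i := by ext; simp
  have h2 : Finset.univ.filter (fun j => ¬ j ≤ i) = Finset.Ioi i := by ext; simp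
  rw [h1, h2, ← Finset.Iio_insert, Finset.sum_insert (by simp)] at h
  linarith

/-- AM-GM in the form `2 x c ≤ (D / 2) x² + (2 / D) c²`, combined with `c² ≤ 1`. -/
theorem quad_nonneg {D x c : ℝ} (hD : 0 < D) (h1 : -1 ≤ c) (h2 : c ≤ 1) :
    0 ≤ D / 2 * x ^ 2 - 2 * x * c + 2 / D := by
  have hc : c ^ 2 ≤ 1 := by nlinarith
  have h : D / 2 * x ^ 2 - 2 * x * c + 2 / D
      = ((D * x - 2 * c) ^ 2 + 4 * (1 - c ^ 2)) / (2 * D) := by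
    field_simp
    ring
  rw [h]
  apply div_nonneg _ (by positivity)
  nlinarith [sq_nonneg (D * x - 2 * c)]

theorem hfun_recursion (k d : ℕ) (hk : 1 ≤ k) (hd : 1 ≤ d) (α β γ : Fin k → ℝ)
    (hα : memSimplex α) (hβ : memSimplex β) (hγ : memSimplex γ)
    (hsum : ∀ i, 2 * α i = β i + γ i) :
    hfun k (d - 1) β + hfun k (d - 1) γ + 4 * ∑ i, ∑ j ∈ Finset.Ioi i, β i * γ j ≤
      2 * hfun k d α := by
  obtain ⟨hβ0, hβ1⟩ := hβ
  obtain ⟨-, hγ1⟩ := hγ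
  obtain ⟨D, rfl⟩ : ∃ D, d = D + 1 := ⟨d - 1, by omega⟩
  set L : Fin k → ℝ := fun i => ∑ j ∈ Finset.Iio i, β j with hL
  set U : Fin k → ℝ := fun i => ∑ j ∈ Finset.Ioi i, β j with hU
  have hLU : ∀ i, L i + β i + U i = 1 := fun i => by
    rw [← hβ1]; exact sum_Iio_add_self_add_sum_Ioi β i
  have hL0 : ∀ i, 0 ≤ L i := fun i => Finset.sum_nonneg fun j _ => (hβ0 j).1
  have hU0 : ∀ i, 0 ≤ U i := fun i => Finset.sum_nonneg fun j _ => (hβ0 j).1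
  have hS : ∑ i, ∑ j ∈ Finset.Ioi i, β i * γ j = ∑ i, L i * γ i := by
    rw [sum_Ioi_swap]
    simp only [hL, Finset.sum_mul]
  have hsym : ∑ i, β i * U i = ∑ i, β i * L i := by
    simp only [hL, hU, Finset.mul_sum]
    rw [sum_Ioi_swap]
    simp only [mul_comm]
  have hDpos : (0 : ℝ) < (D : ℝ) + 1 := by positivity
  have key : 0 ≤ ∑ i, (((D : ℝ) + 1) / 2 * (β i - γ i) ^ 2
      - 2 * (β i - γ i) * (U i - L i) + 2 / ((D : ℝ) + 1)) :=
    Finset.sum_nonneg fun i _ => quad_nonneg hDpos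
      (by linarith [hLU i, hL0 i, hU0 i, (hβ0 i).1])
      (by linarith [hLU i, hL0 i, hU0 i, (hβ0 i).1])
  -- `2 * ∑ i, γ i` comes from eliminating `U i` through `L i + β i + U i = 1`;
  -- it supplies the constant `2` in the difference of the two sides.
  have hexp : ∑ i, (((D : ℝ) + 1) / 2 * (β i - γ i) ^ 2
      - 2 * (β i - γ i) * (U i - L i) + 2 / ((D : ℝ) + 1))
      = ((D : ℝ) + 1) * (∑ i, β i ^ 2) + ((D : ℝ) + 1) * (∑ i, γ i ^ 2)
        - 2 * ((D : ℝ) + 1 + 1 + 1) * (∑ i, α i ^ 2)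
        + (∑ i, β i ^ 2) + (∑ i, γ i ^ 2)
        - 2 * (∑ i, β i * U i) + 2 * (∑ i, β i * L i)
        + 2 * (∑ i, γ i) - 4 * (∑ i, L i * γ i) + k * (2 / ((D : ℝ) + 1)) := by
    have hk' : (k : ℝ) * (2 / ((D : ℝ) + 1)) = ∑ _i : Fin k, 2 / ((D : ℝ) + 1) := by simp
    rw [hk']
    simp only [Finset.mul_sum, ← Finset.sum_add_distrib, ← Finset.sum_sub_distrib]
    refine Finset.sum_congr rfl fun i _ => ?_
    have ha : α i = (β i + γ i) / 2 := by linarith [hsum i]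
    have hu : U i = 1 - L i - β i := by linarith [hLU i]
    rw [ha, hu]
    ring
  rw [hexp, hsym, hγ1] at key
  rw [hS]
  simp only [hfun, Nat.add_sub_cancel]
  rw [Finset.sum_Icc_succ_top (by omega : 1 ≤ D + 1)]
  push_cast
  have hdiv : (k : ℝ) * (2 / ((D : ℝ) + 1)) = 2 * (k * (1 / ((D : ℝ) + 1))) := by ring
  rw [hdiv] at key
  linarith
end

section
/- For every real ε ∈ (0,1] and all integers k ≥ 1 and d ≥ 0, there is an N such that for every n ≥ N divisible by 2^d there exists an ordered graph G on Fin n with exactly d·n²/2^{d+1} edges and the following property: for every map f : Fin n → Fin k, the number of edges {x,y} of G with x < y and f(x) < f(y) is at most (h_d(α) + d·ε)·n²/2^{d+2}, where α = (α_1,…,α_k) ∈ Δ_k is given by α_i = |f⁻¹(i)|/n. -/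
/-! ### Quasirandom bipartite graphs -/

/-- For a uniformly random `φ : Fin q → Fin Q`, the terms `z j (φ j)` are independent and centred,
so the second moment of their sum is at most `q * B ^ 2`; here without the normalisation by
`Q ^ q`. -/
lemma second_moment_le (Q : ℕ) (B : ℝ) (q : ℕ) (z : Fin q → Fin Q → ℝ)
    (h0 : ∀ j, ∑ c, z j c = 0) (hB : ∀ j c, |z j c| ≤ B) :
    ∑ φ : Fin q → Fin Q, (∑ j, z j (φ j)) ^ 2 ≤ (Q : ℝ) ^ q * q * B ^ 2 := by
  induction q with
  | zero => simp
  | succ q ih =>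
    have ih' := ih (fun j => z j.succ) (fun j => h0 _) (fun j c => hB _ _)
    rw [← (Fin.consEquiv fun _ : Fin (q + 1) => Fin Q).sum_comp, Fintype.sum_prod_type,
      Finset.sum_comm]
    simp only [Fin.consEquiv_apply, Fin.sum_univ_succ, Fin.cons_zero, Fin.cons_succ]
    have hz : ∑ c, z 0 c ^ 2 ≤ Q * B ^ 2 := by
      calc ∑ c, z 0 c ^ 2 ≤ ∑ _c : Fin Q, B ^ 2 :=
            Finset.sum_le_sum fun c _ => sq_le_sq' (abs_le.1 (hB 0 c)).1 (abs_le.1 (hB 0 c)).2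
        _ = Q * B ^ 2 := by simp
    have key : ∀ ψ : Fin q → Fin Q, ∑ c, (z 0 c + ∑ j : Fin q, z j.succ (ψ j)) ^ 2
        = ∑ c, z 0 c ^ 2 + Q * (∑ j : Fin q, z j.succ (ψ j)) ^ 2 := by
      intro ψ
      simp only [add_sq, Finset.sum_add_distrib, ← Finset.sum_mul, ← Finset.mul_sum, h0]
      simp
    simp only [key, Finset.sum_add_distrib, ← Finset.mul_sum]
    have hQ : (0 : ℝ) ≤ Q := by positivity
    have e1 : (Q : ℝ) ^ q * ∑ c, z 0 c ^ 2 ≤ Q ^ q * (Q * B ^ 2) := by gcongr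
    have e2 := mul_le_mul_of_nonneg_left ih' hQ
    simp only [Finset.sum_const, Finset.card_univ, Fintype.card_fun, Fintype.card_fin,
      nsmul_eq_mul]
    push_cast
    calc _ ≤ (Q : ℝ) ^ q * (Q * B ^ 2) + Q * (Q ^ q * q * B ^ 2) := add_le_add e1 e2
      _ = _ := by ring

/-- The sum over `x < L` of a nonnegative function of period `R` is at most `⌊L / R⌋ + 1` times its
sum over one period. -/
lemma sum_mod_le (L R : ℕ) (hR : 0 < R) (g : ℕ → ℝ) (hg : ∀ x, 0 ≤ g x) :
    ∑ x ∈ Finset.range L, g (x % R) ≤ ((L / R : ℕ) + 1 : ℝ) * ∑ x ∈ Finset.range R, g x := by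
  have h : ∀ K : ℕ, ∑ x ∈ Finset.range (K * R), g (x % R) = K * ∑ x ∈ Finset.range R, g x := by
    intro K
    induction K with
    | zero => simp
    | succ K ih =>
      rw [Nat.succ_mul, Finset.sum_range_add, ih]
      have : ∑ x ∈ Finset.range R, g ((K * R + x) % R) = ∑ x ∈ Finset.range R, g x := by
        refine Finset.sum_congr rfl fun x hx => ?_
        rw [Nat.mul_add_mod_of_lt (Finset.mem_range.1 hx)]
      rw [this]; push_cast; ring
  have := h (L / R + 1)
  push_cast at this
  rw [← this]
  refine Finset.sum_le_sum_of_subset_of_nonneg ?_ fun _ _ _ => hg _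
  exact Finset.range_subset_range.2 (Nat.lt_div_mul_add hR |>.le.trans (by rw [Nat.succ_mul]))

lemma card_mod_eq_le (M q j : ℕ) :
    (((Finset.range M).filter fun t => t % q = j).card : ℝ) ≤ (M : ℝ) / q + 1 := by
  have h1 : ((Finset.range M).filter fun t => t % q = j).card ≤ M / q + 1 := by
    rw [← Finset.card_range (M / q + 1)]
    refine Finset.card_le_card_of_injOn (fun t => t / q) ?_ ?_
    · intro t ht
      simp only [Finset.coe_filter, Finset.mem_range, Set.mem_ofPred_eq] at ht
      simpa using Nat.lt_succ_of_le (Nat.div_le_div_right ht.1.le)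
    · intro a ha b hb hab
      simp only [Finset.coe_filter, Finset.mem_range, Set.mem_ofPred_eq] at ha hb hab
      rw [← Nat.div_add_mod a q, ← Nat.div_add_mod b q, hab, ha.2, hb.2]
  calc (((Finset.range M).filter fun t => t % q = j).card : ℝ) ≤ ((M / q + 1 : ℕ) : ℝ) := by
        exact_mod_cast h1
    _ ≤ _ := by push_cast; gcongr; exact Nat.cast_div_le

/-- For large `M` there is a bipartite graph between two copies of `{0, …, Q * M - 1}` with density
exactly `1 / Q` in which no pair of vertex sets spans many more edges than its share. -/
lemma exists_quasirandom_bipartite_s10 (Q : ℕ) (hQ : 0 < Q) (η : ℝ) (hη : 0 < η) :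
    ∃ N : ℕ, ∀ M : ℕ, N ≤ M → ∃ B : Finset (ℕ × ℕ),
      B ⊆ Finset.range (Q * M) ×ˢ Finset.range (Q * M) ∧ B.card = Q * M * M ∧
      ∀ A C : Finset ℕ, A ⊆ Finset.range (Q * M) → C ⊆ Finset.range (Q * M) →
        ((B ∩ A ×ˢ C).card : ℝ) ≤ (A.card : ℝ) * C.card / Q + η * (M : ℝ) ^ 2 := by
  obtain ⟨q, hqη⟩ := exists_nat_gt (8 * (Q : ℝ) ^ 2 / η ^ 2)
  have hq : 0 < q := by
    have : (0 : ℝ) ≤ 8 * (Q : ℝ) ^ 2 / η ^ 2 := by positivity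
    exact_mod_cast this.trans_lt hqη
  have hqη' : 8 * (Q : ℝ) ^ 2 ≤ η ^ 2 * q := by
    rw [div_lt_iff₀ (by positivity)] at hqη; linarith
  have hR : 0 < Q ^ q := by positivity
  refine ⟨q + Q ^ q, fun M hM => ?_⟩
  have hqM : q ≤ M := by omega
  have hRM : Q ^ q ≤ M := by omega
  have hM0 : 0 < M := by omega
  -- `κ y` is the class of the offset of `y` in its interval of length `M`, `c y` the index of that
  -- interval, and `row` runs through all functions `Fin q → Fin Q` periodically.
  let κ : ℕ → Fin q := fun y => ⟨y % M % q, Nat.mod_lt _ hq⟩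
  let c : ℕ → Fin Q := fun y => ⟨y / M % Q, Nat.mod_lt _ hQ⟩
  let row : ℕ → Fin q → Fin Q := fun r => finFunctionFinEquiv.symm ⟨r % Q ^ q, Nat.mod_lt _ hR⟩
  have hrow : ∀ x, row (x % Q ^ q) = row x := by intro x; simp [row]
  let B : Finset (ℕ × ℕ) := (Finset.range (Q * M) ×ˢ Finset.range (Q * M)).filter
    fun p => c p.2 = row p.1 (κ p.2)
  have hBsum : ∀ A C : Finset ℕ, A ⊆ Finset.range (Q * M) → C ⊆ Finset.range (Q * M) →
      (B ∩ A ×ˢ C).card = ∑ x ∈ A, (C.filter fun y => c y = row x (κ y)).card := by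
    intro A C hA hC
    rw [← Finset.card_sigma]
    refine Finset.card_nbij' (fun p => ⟨p.1, p.2⟩) (fun p => (p.1, p.2)) ?_ ?_ ?_ ?_
    · rintro ⟨x, y⟩ h
      simp only [B, Finset.coe_inter, Set.mem_inter_iff, Finset.mem_coe, Finset.mem_filter,
        Finset.mem_product] at h
      simp only [Finset.mem_coe, Finset.mem_sigma, Finset.mem_filter]
      exact ⟨h.2.1, h.2.2, h.1.2⟩
    · rintro ⟨x, y⟩ h
      simp only [Finset.mem_coe, Finset.mem_sigma, Finset.mem_filter] at h
      simp only [B, Finset.coe_inter, Set.mem_inter_iff, Finset.mem_coe, Finset.mem_filter,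
        Finset.mem_product]
      exact ⟨⟨⟨hA h.1, hC h.2.1⟩, h.2.2⟩, h.1, h.2.1⟩
    · intro _ _; rfl
    · intro _ _; rfl
  have hdeg : ∀ x, ((Finset.range (Q * M)).filter fun y => c y = row x (κ y)).card = M := by
    intro x
    conv_rhs => rw [← Finset.card_range M]
    have hdm : ∀ t < M, ∀ e : ℕ, (e * M + t) % M = t ∧ (e * M + t) / M = e := by
      intro t ht e
      refine ⟨Nat.mul_add_mod_of_lt ht, ?_⟩
      rw [mul_comm, Nat.mul_add_div hM0, Nat.div_eq_of_lt ht, add_zero]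
    refine Finset.card_nbij' (fun y => y % M) (fun t => (row x (κ t) : ℕ) * M + t) ?_ ?_ ?_ ?_
    · intro y _
      simpa using Nat.mod_lt y hM0
    · intro t ht
      have ht' : t < M := by simpa using ht
      obtain ⟨h1, h2⟩ := hdm t ht' (row x (κ t))
      have hκ : κ ((row x (κ t) : ℕ) * M + t) = κ t := by
        apply Fin.ext
        show ((row x (κ t) : ℕ) * M + t) % M % q = t % M % q
        rw [h1, Nat.mod_eq_of_lt ht']
      have hlt := (row x (κ t)).isLt
      simp only [Finset.coe_filter, Finset.mem_range, Set.mem_ofPred_eq, hκ]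
      refine ⟨?_, ?_⟩
      · nlinarith
      · apply Fin.ext
        simp only [c, h2]
        exact Nat.mod_eq_of_lt hlt
    · intro y hy
      simp only [Finset.coe_filter, Finset.mem_range, Set.mem_ofPred_eq] at hy
      have hκ : κ (y % M) = κ y := by simp [κ]
      have hyQ : y / M < Q := Nat.div_lt_of_lt_mul (by rw [mul_comm]; exact hy.1)
      have := congrArg Fin.val hy.2
      simp only [c, Nat.mod_eq_of_lt hyQ] at this
      simp only [hκ, ← this]
      exact Nat.div_add_mod' y M
    · intro t ht
      have ht' : t < M := by simpa using ht
      exact (hdm t ht' _).1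
  refine ⟨B, Finset.filter_subset _ _, ?_, ?_⟩
  · have := hBsum _ _ subset_rfl subset_rfl
    rw [Finset.inter_eq_left.2 (Finset.filter_subset _ _)] at this
    rw [this]
    simp [hdeg]
  intro A C hA hC
  have hQ' : (0 : ℝ) < Q := by exact_mod_cast hQ
  have hq' : (0 : ℝ) < q := by exact_mod_cast hq
  have hM' : (0 : ℝ) < M := by exact_mod_cast hM0
  -- `z j e` is the number of `y ∈ C` of class `j` in interval `e`, minus its average over `e`.
  let u : Fin q → ℝ := fun j => (C.filter fun y => κ y = j).card
  let w : Fin q → Fin Q → ℝ := fun j e => ((C.filter fun y => κ y = j).filter fun y => c y = e).card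
  let z : Fin q → Fin Q → ℝ := fun j e => w j e - u j / Q
  have hwu : ∀ j, ∑ e, w j e = u j := by
    intro j
    simp only [w, u]
    rw [Finset.card_eq_sum_card_fiberwise (f := c) (t := Finset.univ) (fun _ _ => by simp)]
    push_cast; rfl
  have huC : ∑ j, u j = C.card := by
    simp only [u]
    rw [Finset.card_eq_sum_card_fiberwise (f := κ) (t := Finset.univ) (s := C)
      (fun _ _ => by simp)]
    push_cast; rfl
  have hz0 : ∀ j, ∑ e, z j e = 0 := by
    intro j
    simp only [z, Finset.sum_sub_distrib, hwu]
    simp; field_simp; simp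
  have hw : ∀ j e, w j e ≤ 2 * M / q := by
    intro j e
    have h1 : ((C.filter fun y => κ y = j).filter fun y => c y = e).card ≤
        ((Finset.range M).filter fun t => t % q = j).card := by
      refine Finset.card_le_card_of_injOn (fun y => y % M) ?_ ?_
      · intro y hy
        simp only [Finset.coe_filter, Finset.mem_filter, Set.mem_ofPred_eq] at hy
        simp only [Finset.coe_filter, Finset.mem_range, Set.mem_ofPred_eq]
        exact ⟨Nat.mod_lt _ hM0, congrArg Fin.val hy.1.2⟩
      · intro y hy y' hy' hyy
        simp only [Finset.coe_filter, Finset.mem_filter, Set.mem_ofPred_eq] at hy hy'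
        have hlt : ∀ y ∈ C, y / M < Q := fun y hy => Nat.div_lt_of_lt_mul
          (by rw [mul_comm]; exact Finset.mem_range.1 (hC hy))
        have := congrArg Fin.val (hy.2.trans hy'.2.symm)
        simp only [c, Nat.mod_eq_of_lt (hlt y hy.1.1), Nat.mod_eq_of_lt (hlt y' hy'.1.1)] at this
        have hyy' : y % M = y' % M := hyy
        rw [← Nat.div_add_mod y M, ← Nat.div_add_mod y' M, this, hyy']
    have h2 := card_mod_eq_le M q j
    have h3 : (1 : ℝ) ≤ M / q := by
      rw [one_le_div hq']; exact_mod_cast hqM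
    calc w j e ≤ (M : ℝ) / q + 1 := le_trans (Nat.cast_le.2 h1) h2
      _ ≤ M / q + M / q := by linarith
      _ = _ := by ring
  have hu : ∀ j, u j / Q ≤ 2 * M / q := by
    intro j
    rw [div_le_iff₀ hQ', ← hwu]
    calc ∑ e, w j e ≤ ∑ _e : Fin Q, (2 * (M : ℝ) / q) := Finset.sum_le_sum fun e _ => hw j e
      _ = _ := by simp; ring
  have hzB : ∀ j e, |z j e| ≤ 2 * M / q := by
    intro j e
    have h1 : 0 ≤ w j e := Nat.cast_nonneg _
    have h2 : 0 ≤ u j / Q := div_nonneg (Nat.cast_nonneg _) hQ'.le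
    have h3 := hw j e
    have h4 := hu j
    rw [abs_le]; simp only [z]
    constructor <;> linarith
  -- The deviation of the degree of `x` into `C` from `#C / Q`.
  let D : ℕ → ℝ := fun x => ∑ j, z j (row x j)
  have hD : ∀ x, ((C.filter fun y => c y = row x (κ y)).card : ℝ) = C.card / Q + D x := by
    intro x
    have h1 : ((C.filter fun y => c y = row x (κ y)).card : ℝ) = ∑ j, w j (row x j) := by
      rw [Finset.card_eq_sum_card_fiberwise (f := κ) (t := Finset.univ) (fun _ _ => by simp)]
      push_cast
      refine Finset.sum_congr rfl fun j _ => ?_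
      simp only [w]
      congr 2
      ext y
      simp only [Finset.mem_filter]
      constructor
      · rintro ⟨⟨h1, h2⟩, rfl⟩; exact ⟨⟨h1, rfl⟩, h2⟩
      · rintro ⟨⟨h1, rfl⟩, h2⟩; exact ⟨⟨h1, h2⟩, rfl⟩
    simp only [D, z, Finset.sum_sub_distrib, ← Finset.sum_div, huC, h1]
    ring
  have hcount : ((B ∩ A ×ˢ C).card : ℝ) = A.card * C.card / Q + ∑ x ∈ A, D x := by
    rw [hBsum A C hA hC]
    push_cast
    simp only [hD, Finset.sum_add_distrib, Finset.sum_const, nsmul_eq_mul]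
    ring
  have hperiod : ∑ x ∈ Finset.range (Q ^ q), D x ^ 2 ≤ (Q : ℝ) ^ q * q * (2 * M / q) ^ 2 := by
    refine le_trans (le_of_eq ?_) (second_moment_le Q (2 * M / q) q z hz0 hzB)
    rw [Finset.sum_range, ← finFunctionFinEquiv.symm.sum_comp]
    refine Finset.sum_congr rfl fun i _ => ?_
    simp [D, row, Nat.mod_eq_of_lt i.isLt]
  have hall : ∑ x ∈ Finset.range (Q * M), D x ^ 2 ≤ 8 * Q * (M : ℝ) ^ 3 / q := by
    have hmod : ∑ x ∈ Finset.range (Q * M), D x ^ 2 =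
        ∑ x ∈ Finset.range (Q * M), D (x % Q ^ q) ^ 2 := by
      simp only [D, hrow]
    rw [hmod]
    refine (sum_mod_le (Q * M) (Q ^ q) hR (fun x => D x ^ 2) fun x => sq_nonneg _).trans ?_
    have h1 : ((Q * M / Q ^ q : ℕ) + 1 : ℝ) ≤ 2 * (Q * M) / (Q : ℝ) ^ q := by
      have h2 : ((Q * M / Q ^ q : ℕ) : ℝ) ≤ (Q * M) / (Q : ℝ) ^ q := by
        refine Nat.cast_div_le.trans ?_
        push_cast; rfl
      have h3 : (1 : ℝ) ≤ (Q * M) / (Q : ℝ) ^ q := by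
        rw [one_le_div (by positivity)]
        exact_mod_cast hRM.trans (Nat.le_mul_of_pos_left M hQ)
      calc _ ≤ (Q * M) / (Q : ℝ) ^ q + (Q * M) / (Q : ℝ) ^ q := add_le_add h2 h3
        _ = _ := by ring
    calc _ ≤ 2 * (Q * M) / (Q : ℝ) ^ q * ((Q : ℝ) ^ q * q * (2 * M / q) ^ 2) := by
          apply mul_le_mul h1 hperiod (Finset.sum_nonneg fun _ _ => sq_nonneg _) (by positivity)
      _ = _ := by field_simp; ring
  have hsq : (∑ x ∈ A, D x) ^ 2 ≤ (η * (M : ℝ) ^ 2) ^ 2 := by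
    calc (∑ x ∈ A, D x) ^ 2 ≤ A.card * ∑ x ∈ A, D x ^ 2 := sq_sum_le_card_mul_sum_sq
      _ ≤ (Q * M) * (8 * Q * (M : ℝ) ^ 3 / q) := by
          apply mul_le_mul
          · have := Finset.card_le_card hA
            rw [Finset.card_range] at this
            exact_mod_cast this
          · exact (Finset.sum_le_sum_of_subset_of_nonneg hA fun _ _ _ => sq_nonneg _).trans hall
          · exact Finset.sum_nonneg fun _ _ => sq_nonneg _
          · positivity
      _ = (8 * (Q : ℝ) ^ 2) * ((M : ℝ) ^ 4 / q) := by ring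
      _ ≤ (η ^ 2 * q) * ((M : ℝ) ^ 4 / q) := by gcongr
      _ = _ := by field_simp
  have := abs_le_of_sq_le_sq hsq (by positivity)
  rw [hcount]
  linarith [le_abs_self (∑ x ∈ A, D x)]

/-! ### The inequality behind the recursion -/

/-- The gain needed to pass from `d = D - 1` to `d = D`: `a` and `b` are the colour class sizes in
the two halves of the vertex set. -/
lemma density_step (k : ℕ) (D m : ℝ) (hD : 0 < D) (a b : Fin k → ℝ)
    (ha : ∀ i, 0 ≤ a i) (hb : ∀ i, 0 ≤ b i) (hsa : ∑ i, a i = m) (hsb : ∑ i, b i = m) :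
    8 * ∑ i, ∑ j, (if i < j then a i * b j else 0) ≤
      4 * m ^ 2 - ∑ i, (a i + b i) ^ 2 + (D + 1) * ∑ i, (a i - b i) ^ 2 + 4 * k * m ^ 2 / D := by
  set σ : Fin k → Fin k → ℝ := fun i j => if i < j then 1 else if j < i then -1 else 0 with hσ
  have hanti : ∀ i j, σ j i = - σ i j := by
    intro i j
    rcases lt_trichotomy i j with h | h | h <;> simp [hσ, h, h.not_gt]
  have habs : ∀ i j, |σ i j| ≤ 1 := by
    intro i j
    simp only [hσ]; split_ifs <;> simp
  have hskew : ∀ u v : Fin k → ℝ,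
      ∑ i, ∑ j, σ i j * (u i * v j) = - ∑ i, ∑ j, σ i j * (v i * u j) := by
    intro u v
    rw [Finset.sum_comm]
    simp only [← Finset.sum_neg_distrib]
    refine Finset.sum_congr rfl fun i _ => Finset.sum_congr rfl fun j _ => ?_
    rw [hanti]; ring
  have hprod : ∑ i, ∑ j, a i * b j = m ^ 2 := by
    rw [← Finset.sum_mul_sum, hsa, hsb, sq]
  have hsplit : 2 * ∑ i, ∑ j, (if i < j then a i * b j else 0) =
      ∑ i, ∑ j, σ i j * (a i * b j) + m ^ 2 - ∑ i, a i * b i := by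
    have : ∀ i, a i * b i = ∑ j, if i = j then a i * b j else 0 := by intro i; simp
    rw [← hprod, Finset.sum_congr rfl fun i _ => this i, Finset.mul_sum,
      ← Finset.sum_add_distrib, ← Finset.sum_sub_distrib]
    refine Finset.sum_congr rfl fun i _ => ?_
    rw [Finset.mul_sum, ← Finset.sum_add_distrib, ← Finset.sum_sub_distrib]
    refine Finset.sum_congr rfl fun j _ => ?_
    rcases lt_trichotomy i j with h | h | h
    · simp [hσ, h, h.ne]; ring
    · simp [hσ, h]
    · simp [hσ, h, h.not_gt, h.ne']
  have haa := hskew a a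
  have hbb := hskew b b
  have hab := hskew a b
  -- The antisymmetric part, expressed through `a - b` and `a + b`.
  have hcross : 4 * ∑ i, ∑ j, σ i j * (a i * b j) =
      ∑ i, 2 * ((a i - b i) * ∑ j, σ i j * (a j + b j)) := by
    have : ∑ i, 2 * ((a i - b i) * ∑ j, σ i j * (a j + b j)) =
        2 * (∑ i, ∑ j, σ i j * (a i * a j) + ∑ i, ∑ j, σ i j * (a i * b j)
          - ∑ i, ∑ j, σ i j * (b i * a j) - ∑ i, ∑ j, σ i j * (b i * b j)) := by
      simp only [← Finset.sum_add_distrib, ← Finset.sum_sub_distrib, Finset.mul_sum]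
      exact Finset.sum_congr rfl fun i _ => Finset.sum_congr rfl fun j _ => by ring
    rw [this]; linarith
  have hT : ∀ i, |∑ j, σ i j * (a j + b j)| ≤ 2 * m := by
    intro i
    calc _ ≤ ∑ j, |σ i j * (a j + b j)| := Finset.abs_sum_le_sum_abs _ _
      _ ≤ ∑ j, (a j + b j) := Finset.sum_le_sum fun j _ => by
          have := add_nonneg (ha j) (hb j)
          rw [abs_mul, abs_of_nonneg this]
          exact mul_le_of_le_one_left this (habs i j)
      _ = 2 * m := by rw [Finset.sum_add_distrib, hsa, hsb]; ring
  have hbound : ∑ i, 2 * ((a i - b i) * ∑ j, σ i j * (a j + b j)) ≤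
      D * ∑ i, (a i - b i) ^ 2 + 4 * k * m ^ 2 / D := by
    calc _ ≤ ∑ i, (D * (a i - b i) ^ 2 + 4 * m ^ 2 / D) := Finset.sum_le_sum fun i _ => by
          set T := ∑ j, σ i j * (a j + b j)
          have h1 : T ^ 2 ≤ 4 * m ^ 2 := by
            have := sq_le_sq' (abs_le.1 (hT i)).1 (abs_le.1 (hT i)).2
            linarith
          have h2 : T ^ 2 / D ≤ 4 * m ^ 2 / D := by gcongr
          have h3 : D * (a i - b i) ^ 2 + T ^ 2 / D - 2 * ((a i - b i) * T)
              = (D * (a i - b i) - T) ^ 2 / D := by field_simp; ring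
          have h4 : 0 ≤ (D * (a i - b i) - T) ^ 2 / D := by positivity
          linarith
      _ = _ := by
          rw [Finset.sum_add_distrib, ← Finset.mul_sum]; simp; ring
  have hpol : ∑ i, (a i + b i) ^ 2 = ∑ i, (a i - b i) ^ 2 + 4 * ∑ i, a i * b i := by
    rw [Finset.mul_sum, ← Finset.sum_add_distrib]
    exact Finset.sum_congr rfl fun i _ => by ring
  linarith

/-! ### The recursive construction -/

/-- The number of `x < L` with colour `i`. -/
def colourCount {k : ℕ} (f : ℕ → Fin k) (L : ℕ) (i : Fin k) : ℕ :=
  ((Finset.range L).filter fun x => f x = i).card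

lemma sum_colourCount {k : ℕ} (f : ℕ → Fin k) (L : ℕ) : ∑ i, colourCount f L i = L := by
  have := Finset.card_eq_sum_card_fiberwise (f := f) (t := Finset.univ) (s := Finset.range L)
    (fun _ _ => by simp)
  rw [Finset.card_range] at this
  exact this.symm

lemma colourCount_add {k : ℕ} (f : ℕ → Fin k) (L : ℕ) (i : Fin k) :
    colourCount f (L + L) i = colourCount f L i + colourCount (fun x => f (L + x)) L i := by
  simp only [colourCount, Finset.card_filter]
  exact Finset.sum_range_add _ _ _

/-- Summing the discrepancy bound over all pairs of colours `i < j` bounds the number of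
colour-increasing edges of a bipartite graph whose sides are coloured by `f` and `g`. -/
lemma card_crossing_le {k : ℕ} (Q L : ℕ) (e : ℝ) (he : 0 ≤ e) (B : Finset (ℕ × ℕ))
    (hB : B ⊆ Finset.range L ×ˢ Finset.range L)
    (hdisc : ∀ A C : Finset ℕ, A ⊆ Finset.range L → C ⊆ Finset.range L →
        ((B ∩ A ×ˢ C).card : ℝ) ≤ (A.card : ℝ) * C.card / Q + e) (f g : ℕ → Fin k) :
    ((B.filter fun p => f p.1 < g p.2).card : ℝ) ≤
      (∑ i, ∑ j, if i < j then (colourCount f L i : ℝ) * colourCount g L j else 0) / Q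
        + (k : ℝ) ^ 2 * e := by
  rw [Finset.card_eq_sum_card_fiberwise (f := fun p => (f p.1, g p.2)) (t := Finset.univ)
    (fun _ _ => by simp)]
  push_cast
  rw [Fintype.sum_prod_type]
  calc _ ≤ ∑ i : Fin k, ∑ j : Fin k,
        ((if i < j then (colourCount f L i : ℝ) * colourCount g L j else 0) / Q + e) := by
        refine Finset.sum_le_sum fun i _ => Finset.sum_le_sum fun j _ => ?_
        split_ifs with hij
        · refine le_trans ?_ (hdisc _ _ (Finset.filter_subset (fun x => f x = i) _)
            (Finset.filter_subset (fun x => g x = j) _))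
          refine Nat.cast_le.2 (Finset.card_le_card ?_)
          rintro ⟨x, y⟩ h
          simp only [Finset.mem_filter, Prod.mk.injEq] at h
          have := Finset.mem_product.1 (hB h.1.1)
          simp only [Finset.mem_inter, Finset.mem_product, Finset.mem_filter]
          exact ⟨h.1.1, ⟨this.1, h.2.1⟩, this.2, h.2.2⟩
        · rw [Finset.card_eq_zero.2]
          · simpa using he
          · rw [Finset.filter_eq_empty_iff]
            rintro ⟨x, y⟩ h h'
            simp only [Finset.mem_filter, Prod.mk.injEq] at h h'
            exact hij (h'.1 ▸ h'.2 ▸ h.2)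
    _ = _ := by
        simp only [Finset.sum_add_distrib, ← Finset.sum_div]
        simp; ring

/-- The construction on `{0, …, 2 ^ d * M - 1}`, with each edge listed as an increasing pair; the
bound is that of the theorem with `h_d` multiplied out, `n ^ 2 * α i ^ 2` being the square of a
class size. -/
lemma exists_edge_set (ε : ℝ) (hε : 0 < ε) (k : ℕ) (hk : 1 ≤ k) (d : ℕ) :
    ∃ N : ℕ, ∀ M : ℕ, N ≤ M → ∃ E : Finset (ℕ × ℕ),
      (∀ p ∈ E, p.1 < p.2 ∧ p.2 < 2 ^ d * M) ∧ 2 * E.card = d * 2 ^ d * M ^ 2 ∧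
      ∀ f : ℕ → Fin k, ((E.filter fun p => f p.1 < f p.2).card : ℝ) ≤
        (((d : ℝ) + 2) * ((2 ^ d * M : ℝ) ^ 2 - ∑ i, (colourCount f (2 ^ d * M) i : ℝ) ^ 2) +
          (k * ∑ r ∈ Finset.Icc 1 d, (1 : ℝ) / r + d * ε) * (2 ^ d * M : ℝ) ^ 2) /
            2 ^ (d + 2) := by
  induction d with
  | zero =>
    refine ⟨0, fun M _ => ⟨∅, by simp, by simp, fun f => ?_⟩⟩
    have h1 : ∑ i, (colourCount f (2 ^ 0 * M) i : ℝ) ^ 2 ≤ (M : ℝ) ^ 2 := by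
      have h2 : ∑ i, (colourCount f (2 ^ 0 * M) i : ℝ) = M := by
        exact_mod_cast (sum_colourCount f (2 ^ 0 * M)).trans (by simp)
      rw [← h2]
      exact Finset.sum_sq_le_sq_sum_of_nonneg fun i _ => Nat.cast_nonneg _
    simp only [Finset.filter_empty, Finset.card_empty, Nat.cast_zero]
    refine div_nonneg ?_ (by positivity)
    simp at h1 ⊢
    linarith
  | succ d ih =>
    obtain ⟨N₁, h₁⟩ := ih
    have hk' : (0 : ℝ) < k := by exact_mod_cast hk
    obtain ⟨N₂, h₂⟩ := exists_quasirandom_bipartite_s10 (2 ^ d) (by positivity)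
      (ε / (2 * (k : ℝ) ^ 2)) (by positivity)
    refine ⟨max N₁ N₂, fun M hM => ?_⟩
    obtain ⟨E, hE, hEc, hEf⟩ := h₁ M (le_of_max_le_left hM)
    obtain ⟨B, hB, hBc, hBd⟩ := h₂ M (le_of_max_le_right hM)
    set L := 2 ^ d * M with hL
    have h2L : 2 ^ (d + 1) * M = L + L := by rw [hL]; ring
    -- `sh` moves an edge of the left half to the right half, `sb` turns a pair of the bipartite
    -- graph into an edge between the halves.
    let sh : ℕ × ℕ ↪ ℕ × ℕ := (addLeftEmbedding L).prodMap (addLeftEmbedding L)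
    let sb : ℕ × ℕ ↪ ℕ × ℕ := (Function.Embedding.refl ℕ).prodMap (addLeftEmbedding L)
    have hsh : ∀ p, sh p = (L + p.1, L + p.2) := fun _ => rfl
    have hsb : ∀ p, sb p = (p.1, L + p.2) := fun _ => rfl
    have hBm : ∀ p ∈ B, p.1 < L ∧ p.2 < L := by
      intro p hp
      simpa using hB hp
    have hd1 : Disjoint E (E.map sh) := by
      rw [Finset.disjoint_left]
      intro p hp hp'
      obtain ⟨p', hp', rfl⟩ := Finset.mem_map.1 hp'
      have := (hE _ hp).2
      rw [hsh] at this
      simp at this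
    have hd2 : Disjoint (E ∪ E.map sh) (B.map sb) := by
      rw [Finset.disjoint_left]
      intro p hp hp'
      obtain ⟨b, hb, rfl⟩ := Finset.mem_map.1 hp'
      rcases Finset.mem_union.1 hp with hp | hp
      · have := (hE _ hp).2
        rw [hsb] at this
        simp at this
      · obtain ⟨p', hp', h⟩ := Finset.mem_map.1 hp
        have h1 := congrArg Prod.fst h
        have h2 := (hBm _ hb).1
        rw [hsh, hsb] at h1
        simp only at h1
        omega
    refine ⟨(E ∪ E.map sh) ∪ B.map sb, ?_, ?_, ?_⟩
    · intro p hp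
      rw [h2L]
      rcases Finset.mem_union.1 hp with hp | hp
      · rcases Finset.mem_union.1 hp with hp | hp
        · have := hE _ hp
          omega
        · obtain ⟨p', hp', rfl⟩ := Finset.mem_map.1 hp
          have := hE _ hp'
          simp only [hsh]
          omega
      · obtain ⟨p', hp', rfl⟩ := Finset.mem_map.1 hp
        have := hBm _ hp'
        simp only [hsb]
        omega
    · rw [Finset.card_union_of_disjoint hd2, Finset.card_union_of_disjoint hd1, Finset.card_map,
        Finset.card_map, hBc]
      calc _ = 2 * (2 * E.card) + 2 * (2 ^ d * M * M) := by ring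
        _ = _ := by rw [hEc]; ring
    · intro f
      -- The colouring of the right half.
      let g : ℕ → Fin k := fun x => f (L + x)
      have hcard : (((E ∪ E.map sh) ∪ B.map sb).filter fun p => f p.1 < f p.2).card ≤
          (E.filter fun p => f p.1 < f p.2).card + (E.filter fun p => g p.1 < g p.2).card
            + (B.filter fun p => f p.1 < g p.2).card := by
        rw [Finset.filter_union, Finset.filter_union, Finset.filter_map, Finset.filter_map]
        refine (Finset.card_union_le _ _).trans (add_le_add ((Finset.card_union_le _ _).trans
          (add_le_add le_rfl ?_)) ?_)
        · rw [Finset.card_map]; exact le_rfl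
        · rw [Finset.card_map]; exact le_rfl
      have hcard' := (Nat.cast_le (α := ℝ)).2 hcard
      push_cast at hcard'
      have e1 := hEf f
      have e2 := hEf g
      have e3 := card_crossing_le (2 ^ d) L _ (by positivity) B hB hBd f g
      set a : Fin k → ℝ := fun i => colourCount f L i with ha
      set b : Fin k → ℝ := fun i => colourCount g L i with hb
      have hLr : (2 ^ d * M : ℝ) = L := by rw [hL]; push_cast; rfl
      have hsa : ∑ i, a i = (L : ℝ) := by
        rw [← sum_colourCount f L]; push_cast; rfl
      have hsb : ∑ i, b i = (L : ℝ) := by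
        rw [← sum_colourCount g L]; push_cast; rfl
      have key := density_step k ((d : ℝ) + 1) L (by positivity) a b
        (fun _ => Nat.cast_nonneg _) (fun _ => Nat.cast_nonneg _) hsa hsb
      have hab : ∀ i, (colourCount f (2 ^ (d + 1) * M) i : ℝ) = a i + b i := by
        intro i
        rw [h2L, colourCount_add]; push_cast; rfl
      have h2Lr : (2 ^ (d + 1) * M : ℝ) = 2 * L := by rw [← hLr]; ring
      have herr : (k : ℝ) ^ 2 * (ε / (2 * (k : ℝ) ^ 2) * (M : ℝ) ^ 2) ≤
          4 * ε * L ^ 2 / 2 ^ (d + 3) := by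
        have h1 : (1 : ℝ) ≤ 2 ^ d := one_le_pow₀ (by norm_num)
        have h3 : 4 * ε * (L : ℝ) ^ 2 / 2 ^ (d + 3) = ε * (M : ℝ) ^ 2 / 2 * 2 ^ d := by
          rw [← hLr, pow_add]; field_simp; ring
        have h2 : (k : ℝ) ^ 2 * (ε / (2 * (k : ℝ) ^ 2) * (M : ℝ) ^ 2) = ε * (M : ℝ) ^ 2 / 2 := by
          field_simp
        rw [h2, h3]
        exact le_mul_of_one_le_right (by positivity) h1
      rw [hLr] at e1 e2
      simp only [hab, h2Lr]
      rw [Finset.sum_Icc_succ_top (by omega)]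
      set H := ∑ r ∈ Finset.Icc 1 d, (1 : ℝ) / r
      set S := ∑ i, ∑ j, if i < j then a i * b j else 0
      have hadd : ∑ i, (a i - b i) ^ 2 =
          2 * ∑ i, a i ^ 2 + 2 * ∑ i, b i ^ 2 - ∑ i, (a i + b i) ^ 2 := by
        simp only [Finset.mul_sum, ← Finset.sum_add_distrib, ← Finset.sum_sub_distrib]
        exact Finset.sum_congr rfl fun i _ => by ring
      rw [hadd] at key
      push_cast
      have e3' : S / ((2 ^ d : ℕ) : ℝ) = 8 * S / 2 ^ (d + 3) := by
        push_cast; rw [pow_add]; field_simp; norm_num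
      rw [e3'] at e3
      have hp : ∀ t : ℝ, t / 2 ^ (d + 2) = 2 * t / 2 ^ (d + 3) := by
        intro t
        rw [pow_succ (2 : ℝ) (d + 2)]; field_simp
      rw [hp] at e1 e2
      refine (hcard'.trans (add_le_add (add_le_add e1 e2) (e3.trans (add_le_add le_rfl herr)))).trans
        ?_
      rw [← add_div, ← add_div, ← add_div]
      rw [show d + 1 + 2 = d + 3 from rfl]
      refine div_le_div_of_nonneg_right ?_ (by positivity)
      have h4 : (k : ℝ) * (H + 1 / ((d : ℝ) + 1)) * (2 * (L : ℝ)) ^ 2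
          = 4 * k * H * (L : ℝ) ^ 2 + 4 * k * (L : ℝ) ^ 2 / ((d : ℝ) + 1) := by ring
      have hA : ∑ i, (colourCount f L i : ℝ) ^ 2 = ∑ i, a i ^ 2 := rfl
      have hB' : ∑ i, (colourCount g L i : ℝ) ^ 2 = ∑ i, b i ^ 2 := rfl
      rw [hA, hB']
      linarith

/-! ### Transfer to graphs on `Fin n` -/

/-- The graph on `Fin n` whose edges are the pairs listed in `E`, in either order. -/
def graphOf (n : ℕ) (E : Finset (ℕ × ℕ)) (hE : ∀ p ∈ E, p.1 < p.2) : SimpleGraph (Fin n) where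
  Adj x y := ((x : ℕ), (y : ℕ)) ∈ E ∨ ((y : ℕ), (x : ℕ)) ∈ E
  symm := ⟨fun _ _ h => h.symm⟩
  loopless := ⟨fun x h => by
    rcases h with h | h <;> exact lt_irrefl _ (hE _ h)⟩

lemma eCount_graphOf (n : ℕ) (E : Finset (ℕ × ℕ)) (hE : ∀ p ∈ E, p.1 < p.2)
    (hn : ∀ p ∈ E, p.2 < n) : eCount (graphOf n E hE) = E.card := by
  rw [eCount, ← Set.ncard_coe_finset]
  symm
  refine Set.ncard_congr
    (fun p hp => s(⟨p.1, (hE p hp).trans (hn p hp)⟩, ⟨p.2, hn p hp⟩)) ?_ ?_ ?_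
  · intro p hp
    exact Or.inl hp
  · intro p p' hp hp' h
    have h1 := hE p hp
    have h2 := hE p' hp'
    rw [Sym2.eq_iff] at h
    simp only [Fin.mk.injEq] at h
    rcases h with h | h
    · exact Prod.ext h.1 h.2
    · omega
  · intro e
    induction e using Sym2.ind with
    | _ x y =>
      intro h
      rcases h with h | h
      · exact ⟨_, h, rfl⟩
      · exact ⟨_, h, Sym2.eq_swap⟩

lemma ncard_increasing_le (n k : ℕ) (E : Finset (ℕ × ℕ)) (hE : ∀ p ∈ E, p.1 < p.2)
    (f : Fin n → Fin k) (g : ℕ → Fin k) (hg : ∀ x : Fin n, g x = f x) :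
    {p : Fin n × Fin n | (graphOf n E hE).Adj p.1 p.2 ∧ p.1 < p.2 ∧ f p.1 < f p.2}.ncard ≤
      (E.filter fun p => g p.1 < g p.2).card := by
  rw [← Set.ncard_coe_finset]
  refine Set.ncard_le_ncard_of_injOn (fun p => ((p.1 : ℕ), (p.2 : ℕ))) ?_ ?_ (Finset.finite_toSet _)
  · rintro ⟨x, y⟩ ⟨h, hxy, hf⟩
    simp only [Finset.coe_filter, Set.mem_ofPred_eq, hg]
    refine ⟨?_, hf⟩
    rcases h with h | h
    · exact h
    · exact absurd (hE _ h) (not_lt.2 (Fin.lt_def.1 hxy).le)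
  · rintro ⟨x, y⟩ _ ⟨x', y'⟩ _ h
    simp only [Prod.mk.injEq] at h
    exact Prod.ext (Fin.ext h.1) (Fin.ext h.2)

theorem exists_quasirandom_graph (ε : ℝ) (hε : ε ∈ Set.Ioc (0 : ℝ) 1) (k d : ℕ)
    (hk : 1 ≤ k) :
    ∃ N : ℕ, ∀ n : ℕ, N ≤ n → 2 ^ d ∣ n →
      ∃ G : SimpleGraph (Fin n),
        (eCount G : ℝ) = (d : ℝ) * n ^ 2 / 2 ^ (d + 1) ∧
        ∀ f : Fin n → Fin k,
          (({p : Fin n × Fin n | G.Adj p.1 p.2 ∧ p.1 < p.2 ∧ f p.1 < f p.2}.ncard : ℝ)) ≤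
            (hfun k d (fun i => ({x : Fin n | f x = i}.ncard : ℝ) / (n : ℝ)) + d * ε) *
              (n : ℝ) ^ 2 / 2 ^ (d + 2) := by
  obtain ⟨N, hN⟩ := exists_edge_set ε hε.1 k hk d
  -- The summand `1` rules out `n = 0`, where the class densities would be divisions by zero.
  refine ⟨2 ^ d * N + 1, ?_⟩
  rintro n hn ⟨M, rfl⟩
  have hNM : N ≤ M := (Nat.mul_lt_mul_left (by positivity)).1 hn |>.le
  obtain ⟨E, hE, hEc, hEf⟩ := hN M hNM
  have hE1 : ∀ p ∈ E, p.1 < p.2 := fun p hp => (hE p hp).1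
  refine ⟨graphOf _ E hE1, ?_, ?_⟩
  · rw [eCount_graphOf _ E hE1 fun p hp => (hE p hp).2]
    have : (2 : ℝ) * E.card = d * 2 ^ d * M ^ 2 := by exact_mod_cast hEc
    rw [eq_div_iff (by positivity), pow_succ]
    push_cast
    linear_combination (2 : ℝ) ^ d * this
  · intro f
    -- Vertices beyond `n` get an arbitrary colour, available since `1 ≤ k`.
    let g : ℕ → Fin k := fun x => if h : x < 2 ^ d * M then f ⟨x, h⟩ else ⟨0, hk⟩
    have hg : ∀ x : Fin (2 ^ d * M), g x = f x := fun x => by simp [g]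
    have hcol : ∀ i, {x : Fin (2 ^ d * M) | f x = i}.ncard = colourCount g (2 ^ d * M) i := by
      intro i
      rw [colourCount, ← Set.ncard_coe_finset]
      refine Set.ncard_congr (fun x _ => (x : ℕ)) ?_ ?_ ?_
      · intro x hx
        have hx' : f x = i := hx
        simp [hg, hx']
      · intro x y _ _ h
        exact Fin.ext h
      · intro x hx
        simp only [Finset.coe_filter, Finset.mem_range, Set.mem_ofPred_eq] at hx
        exact ⟨⟨x, hx.1⟩, (hg ⟨x, hx.1⟩).symm.trans hx.2, rfl⟩
    refine ((Nat.cast_le (α := ℝ)).2 (ncard_increasing_le _ k E hE1 f g hg)).trans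
      ((hEf g).trans (le_of_eq ?_))
    congr 1
    have hn0 : ((2 ^ d * M : ℕ) : ℝ) ≠ 0 := by
      have : 0 < 2 ^ d * M := by omega
      exact_mod_cast this.ne'
    simp only [hfun, hcol, div_pow, ← Finset.sum_div]
    have hcast : (2 ^ d * M : ℝ) = ((2 ^ d * M : ℕ) : ℝ) := by push_cast; rfl
    rw [hcast]
    field_simp
    ring
end

section
/- For every real δ > 0 and every real p ∈ (0,1] there exists N such that for every even n ≥ N there is a bipartite graph B with vertex classes A = {1,…,n/2} and B' = {n/2+1,…,n}, all of whose edges join A to B', satisfying |e(B) − p·n²/4| ≤ δ·n² and, for all subsets X ⊆ A and Y ⊆ B', |e_B(X,Y) − p·|X|·|Y|| ≤ δ·n², where e_B(X,Y) denotes the number of edges of B with one endpoint in X and the other in Y. -/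
/-! ### Periodic sums -/

/-- All complete periods cancel; only a remainder shorter than one period is left. -/
lemma abs_sum_mod_le (N : ℕ) (hN : 0 < N) (H : ℕ → ℝ) (hH : ∀ i, |H i| ≤ 1)
    (h0 : ∑ i ∈ Finset.range N, H i = 0) (m : ℕ) :
    |∑ i ∈ Finset.range m, H (i % N)| ≤ N := by
  induction m using Nat.strong_induction_on with
  | _ m ih =>
    rcases lt_or_ge m N with h | h
    · calc |∑ i ∈ Finset.range m, H (i % N)| ≤ ∑ i ∈ Finset.range m, |H (i % N)| :=
            Finset.abs_sum_le_sum_abs _ _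
        _ ≤ ∑ i ∈ Finset.range m, (1 : ℝ) := Finset.sum_le_sum fun i _ => hH _
        _ = m := by simp
        _ ≤ N := by exact_mod_cast h.le
    · obtain ⟨t, rfl⟩ := Nat.exists_eq_add_of_le h
      have h1 : ∑ i ∈ Finset.range N, H (i % N) = 0 := by
        rw [← h0]
        refine Finset.sum_congr rfl fun i hi => ?_
        rw [Nat.mod_eq_of_lt (Finset.mem_range.1 hi)]
      rw [Finset.sum_range_add, h1, zero_add]
      simpa using ih t (by omega)

lemma card_mod_le (k : ℕ) (hk : 0 < k) (M j : ℕ) :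
    ((((Finset.range M).filter fun y => y % k = j % k).card : ℕ) : ℝ) ≤ M / k + 1 := by
  have h : ((Finset.range M).filter fun y => y % k = j % k).card ≤ M / k + 1 := by
    rw [← Nat.count_eq_card_filter_range]
    have := Nat.count_modEq_card M hk j
    unfold Nat.ModEq at this
    refine this.le.trans ?_
    split_ifs <;> omega
  calc _ ≤ (((M / k + 1 : ℕ)) : ℝ) := by exact_mod_cast h
    _ ≤ _ := by push_cast; gcongr; exact Nat.cast_div_le

/-! ### Independence of digits -/

/-- Two distinct base-`k` digits are independent over the full period `k ^ k`: the factor of the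
product of the sums over single digits that belongs to place `j` is zero. -/
lemma sum_digit_mul_digit (k : ℕ) (g : ℕ → ℝ) (hg : ∑ i ∈ Finset.range k, g i = 0)
    (j j' : ℕ) (hj : j < k) (hj' : j' < k) (hne : j ≠ j') :
    ∑ i ∈ Finset.range (k ^ k), g (i / k ^ j % k) * g (i / k ^ j' % k) = 0 := by
  let J : Fin k := ⟨j, hj⟩
  let J' : Fin k := ⟨j', hj'⟩
  have hJ : J ≠ J' := by simpa [J, J', Fin.ext_iff] using hne
  rw [Finset.sum_range, ← (finFunctionFinEquiv (m := k) (n := k)).sum_comp]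
  have hd : ∀ (f : Fin k → Fin k) (i : Fin k),
      ((finFunctionFinEquiv f : Fin (k ^ k)) : ℕ) / k ^ (i : ℕ) % k = f i := by
    intro f i
    exact congrArg Fin.val (congrFun (finFunctionFinEquiv.symm_apply_apply f) i)
  let G : Fin k → Fin k → ℝ := fun i c => if i = J ∨ i = J' then g c else 1
  have h1 : ∀ f : Fin k → Fin k, ∏ i, G i (f i) = g (f J) * g (f J') := by
    intro f
    have : ∀ i, G i (f i) = (if i = J then g (f i) else 1) * (if i = J' then g (f i) else 1) := by
      intro i
      by_cases h : i = J
      · subst h; simp [G, hJ]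
      · by_cases h' : i = J'
        · subst h'; simp [G, hJ.symm]
        · simp [G, h, h']
    simp only [this]
    rw [Finset.prod_mul_distrib]
    simp
  have h2 : ∏ i, ∑ c, G i c = 0 := by
    refine Finset.prod_eq_zero (Finset.mem_univ J) ?_
    simp only [G, true_or, if_true]
    rw [← Finset.sum_range, hg]
  calc _ = ∑ f : Fin k → Fin k, ∏ i, G i (f i) := by
        refine Finset.sum_congr rfl fun f _ => ?_
        rw [h1, hd f J, hd f J']
    _ = ∏ i, ∑ c, G i c := by rw [Finset.prod_univ_sum, Fintype.piFinset_univ]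
    _ = 0 := h2

/-! ### The discrepancy bound -/

/-- Cauchy-Schwarz over the rows, which removes `X`; passing to absolute values removes `Y`. -/
lemma sq_sum_le {m M : ℕ} (w : ℕ → ℕ → ℝ) (X Y : Finset ℕ) (hX : X ⊆ Finset.range m)
    (hY : Y ⊆ Finset.range M) :
    (∑ x ∈ X, ∑ y ∈ Y, w x y) ^ 2 ≤
      m * ∑ y ∈ Finset.range M, ∑ y' ∈ Finset.range M,
        |∑ x ∈ Finset.range m, w x y * w x y'| := by
  have hc : (X.card : ℝ) ≤ m := by
    exact_mod_cast (Finset.card_le_card hX).trans_eq (Finset.card_range m)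
  calc (∑ x ∈ X, ∑ y ∈ Y, w x y) ^ 2 ≤ X.card * ∑ x ∈ X, (∑ y ∈ Y, w x y) ^ 2 :=
        sq_sum_le_card_mul_sum_sq
    _ ≤ m * ∑ x ∈ Finset.range m, (∑ y ∈ Y, w x y) ^ 2 := by
        refine mul_le_mul hc ?_ (Finset.sum_nonneg fun _ _ => sq_nonneg _) (by positivity)
        exact Finset.sum_le_sum_of_subset_of_nonneg hX fun _ _ _ => sq_nonneg _
    _ = m * ∑ y ∈ Y, ∑ y' ∈ Y, ∑ x ∈ Finset.range m, w x y * w x y' := by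
        congr 1
        simp only [sq, Finset.sum_mul_sum]
        rw [Finset.sum_comm]
        refine Finset.sum_congr rfl fun y _ => ?_
        rw [Finset.sum_comm]
    _ ≤ m * ∑ y ∈ Y, ∑ y' ∈ Y, |∑ x ∈ Finset.range m, w x y * w x y'| := by
        gcongr; exact le_abs_self _
    _ ≤ _ := by
        gcongr
        refine (Finset.sum_le_sum fun y _ => Finset.sum_le_sum_of_subset_of_nonneg hY
          fun _ _ _ => abs_nonneg _).trans ?_
        exact Finset.sum_le_sum_of_subset_of_nonneg hY
          fun _ _ _ => Finset.sum_nonneg fun _ _ => abs_nonneg _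

/-- Pairs of columns incongruent modulo `k` are covered by the term with `k ^ k`; the congruent
pairs, bounded trivially by `m` each, give the other one. -/
lemma digit_discrepancy (k : ℕ) (hk : 0 < k) (g : ℕ → ℝ) (hg1 : ∀ i, |g i| ≤ 1)
    (hg : ∑ i ∈ Finset.range k, g i = 0) (m M : ℕ) (X Y : Finset ℕ)
    (hX : X ⊆ Finset.range m) (hY : Y ⊆ Finset.range M) :
    (∑ x ∈ X, ∑ y ∈ Y, g (x % k ^ k / k ^ (y % k) % k)) ^ 2 ≤
      m * (M * (M * (k : ℝ) ^ k + (M / k + 1) * m)) := by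
  refine (sq_sum_le (fun x y => g (x % k ^ k / k ^ (y % k) % k)) X Y hX hY).trans ?_
  have hgg : ∀ i i', |g i * g i'| ≤ 1 := fun i i' => by
    rw [abs_mul]; exact mul_le_one₀ (hg1 _) (abs_nonneg _) (hg1 _)
  refine mul_le_mul_of_nonneg_left ?_ (by positivity)
  have hrow : ∀ y ∈ Finset.range M, ∑ y' ∈ Finset.range M,
      |∑ x ∈ Finset.range m, g (x % k ^ k / k ^ (y % k) % k) * g (x % k ^ k / k ^ (y' % k) % k)|
      ≤ M * (k : ℝ) ^ k + (M / k + 1) * m := by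
    intro y _
    calc _ ≤ ∑ y' ∈ Finset.range M, ((k : ℝ) ^ k + if y' % k = y % k then (m : ℝ) else 0) := by
          refine Finset.sum_le_sum fun y' _ => ?_
          split_ifs with h
          · calc _ ≤ ∑ x ∈ Finset.range m, (1 : ℝ) :=
                  (Finset.abs_sum_le_sum_abs _ _).trans (Finset.sum_le_sum fun _ _ => hgg _ _)
              _ = m := by simp
              _ ≤ _ := le_add_of_nonneg_left (by positivity)
          · have := abs_sum_mod_le (k ^ k) (by positivity)
              (fun i => g (i / k ^ (y % k) % k) * g (i / k ^ (y' % k) % k)) (fun _ => hgg _ _)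
              (sum_digit_mul_digit k g hg _ _ (Nat.mod_lt _ hk) (Nat.mod_lt _ hk)
                (Ne.symm h)) m
            simpa using this
      _ = M * (k : ℝ) ^ k +
            (((Finset.range M).filter fun y' => y' % k = y % k).card : ℝ) * m := by
          rw [Finset.sum_add_distrib, ← Finset.sum_filter]; simp
      _ ≤ _ := by gcongr; exact card_mod_le k hk M y
  calc _ ≤ ∑ y ∈ Finset.range M, (M * (k : ℝ) ^ k + (M / k + 1) * m) := Finset.sum_le_sum hrow
    _ = _ := by rw [Finset.sum_const, Finset.card_range, nsmul_eq_mul]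

open Classical in
/-- The quasirandom bipartite relation on `ℕ`, before it is cut down to a graph on `Fin n`. -/
lemma exists_relation (ε : ℝ) (hε : 0 < ε) (p : ℝ) (hp : p ∈ Set.Ioc (0 : ℝ) 1) :
    ∃ N : ℕ, ∀ m : ℕ, N ≤ m → ∃ E : ℕ → ℕ → Prop, ∀ X Y : Finset ℕ,
      X ⊆ Finset.range m → Y ⊆ Finset.range (2 * m) →
        |(((X ×ˢ Y).filter fun q => E q.1 q.2).card : ℝ) - p * X.card * Y.card| ≤
          ε * (m : ℝ) ^ 2 := by
  -- `4 / ε` controls the rounding of `p` to `a / k`, and `32 / ε ^ 2` the pairs of columns that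
  -- are congruent modulo `k`.
  obtain ⟨k, hk⟩ := exists_nat_gt (max (4 / ε) (32 / ε ^ 2))
  have hkr : (0 : ℝ) < k := lt_of_lt_of_le (by positivity) ((le_max_left _ _).trans hk.le)
  have hk0 : 0 < k := by exact_mod_cast hkr
  have hk1 : 4 / k ≤ ε := by
    have := (le_max_left _ _).trans hk.le
    rw [div_le_iff₀ hε] at this
    rw [div_le_iff₀ hkr]; linarith
  have hk2 : 32 / k ≤ ε ^ 2 := by
    have := (le_max_right _ _).trans hk.le
    rw [div_le_iff₀ (by positivity)] at this
    rw [div_le_iff₀ hkr]; linarith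
  obtain ⟨N, hN⟩ := exists_nat_gt ((4 * (k : ℝ) ^ k + 2) * 8 / ε ^ 2)
  refine ⟨N, fun m hm => ?_⟩
  have hmN : (4 * (k : ℝ) ^ k + 2) * 8 ≤ m * ε ^ 2 := by
    have h : (4 * (k : ℝ) ^ k + 2) * 8 / ε ^ 2 ≤ m := hN.le.trans (by exact_mod_cast hm)
    rwa [div_le_iff₀ (by positivity)] at h
  set a : ℕ := ⌊p * k⌋₊ with ha
  have hpk : 0 ≤ p * k := mul_nonneg hp.1.le hkr.le
  have ha1 : (a : ℝ) ≤ p * k := Nat.floor_le hpk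
  have ha2 : p * k < a + 1 := Nat.lt_floor_add_one _
  have hakr : (a : ℝ) ≤ k := ha1.trans (by nlinarith [hp.2])
  have hak : a ≤ k := by exact_mod_cast hakr
  have hq0 : (0 : ℝ) ≤ a / k := by positivity
  have hq1 : (a : ℝ) / k ≤ 1 := (div_le_one hkr).2 hakr
  have hpq : |(a : ℝ) / k - p| ≤ 1 / k := by
    have h : (a : ℝ) / k - p = (a - p * k) / k := by field_simp
    rw [h, abs_div, abs_of_pos hkr]
    gcongr
    rw [abs_le]; constructor <;> linarith
  let g : ℕ → ℝ := fun i => (if i < a then 1 else 0) - a / k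
  have hg1 : ∀ i, |g i| ≤ 1 := by
    intro i
    simp only [g]
    rw [abs_le]
    split_ifs <;> constructor <;> linarith
  have hg : ∑ i ∈ Finset.range k, g i = 0 := by
    have : (Finset.range k).filter (fun i => i < a) = Finset.range a := by
      ext i; simp; omega
    simp only [g, Finset.sum_sub_distrib, ← Finset.sum_filter, this]
    simp
    field_simp
    simp
  -- `E` is kept opaque, so that the filter below uses the classical decidability instance.
  obtain ⟨E, hE⟩ : ∃ E : ℕ → ℕ → Prop, ∀ x y, E x y ↔ x % k ^ k / k ^ (y % k) % k < a :=
    ⟨_, fun _ _ => Iff.rfl⟩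
  refine ⟨E, fun X Y hX hY => ?_⟩
  have hS := digit_discrepancy k hk0 g hg1 hg m (2 * m) X Y hX hY
  set S := ∑ x ∈ X, ∑ y ∈ Y, g (x % k ^ k / k ^ (y % k) % k) with hSdef
  have hcount : (((X ×ˢ Y).filter fun q => E q.1 q.2).card : ℝ) =
      S + a / k * X.card * Y.card := by
    simp only [hSdef, g, hE, Finset.sum_sub_distrib, ← Finset.sum_product']
    rw [Finset.card_filter]
    push_cast
    simp
    ring
  have hXc : (X.card : ℝ) ≤ m := by
    exact_mod_cast (Finset.card_le_card hX).trans_eq (Finset.card_range _)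
  have hYc : (Y.card : ℝ) ≤ 2 * m := by
    exact_mod_cast (Finset.card_le_card hY).trans_eq (Finset.card_range _)
  have hS2 : |S| ≤ ε / 2 * (m : ℝ) ^ 2 := by
    refine abs_le_of_sq_le_sq (hS.trans ?_) (by positivity)
    have hm4 : (0 : ℝ) ≤ (m : ℝ) ^ 4 := by positivity
    have hm3 : (0 : ℝ) ≤ (m : ℝ) ^ 3 := by positivity
    have e1 := mul_le_mul_of_nonneg_right hk2 hm4
    have e2 := mul_le_mul_of_nonneg_right hmN hm3
    push_cast
    have e3 : (m : ℝ) * (2 * m * (2 * m * (k : ℝ) ^ k + (2 * m / k + 1) * m)) =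
        (32 / k * (m : ℝ) ^ 4) / 8 + ((4 * (k : ℝ) ^ k + 2) * 8 * (m : ℝ) ^ 3) / 8 := by
      ring
    rw [e3]
    nlinarith
  have hT : |((a : ℝ) / k - p) * (X.card * Y.card)| ≤ ε / 2 * (m : ℝ) ^ 2 := by
    rw [abs_mul, abs_of_nonneg (by positivity : (0 : ℝ) ≤ (X.card : ℝ) * Y.card)]
    calc _ ≤ 1 / (k : ℝ) * (m * (2 * m)) := by gcongr
      _ = 4 / k * ((m : ℝ) ^ 2 / 2) := by ring
      _ ≤ ε * ((m : ℝ) ^ 2 / 2) := by gcongr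
      _ = _ := by ring
  rw [hcount]
  have : S + a / k * X.card * Y.card - p * X.card * Y.card =
      S + ((a : ℝ) / k - p) * (X.card * Y.card) := by ring
  rw [this]
  exact (abs_add_le _ _).trans (by linarith)

/-! ### The graph -/

/-- The bipartite graph on `Fin n` with classes `{x | x < m}` and `{y | m ≤ y}` whose edges are
given by the relation `E`, read from the first class to the second. -/
def bipGraph (n m : ℕ) (E : ℕ → ℕ → Prop) : SimpleGraph (Fin n) where
  Adj x y := ((x : ℕ) < m ∧ m ≤ (y : ℕ) ∧ E x y) ∨ ((y : ℕ) < m ∧ m ≤ (x : ℕ) ∧ E y x)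
  symm := ⟨fun _ _ h => h.symm⟩
  loopless := ⟨fun x h => by omega⟩

/-- Each edge is counted once by its orientation from the first class to the second. -/
lemma eCount_bipGraph (n m : ℕ) (E : ℕ → ℕ → Prop) :
    eCount (bipGraph n m E) =
      {q : Fin n × Fin n | q.1 ∈ Finset.univ.filter (fun x : Fin n => (x : ℕ) < m) ∧
        q.2 ∈ Finset.univ.filter (fun y : Fin n => m ≤ (y : ℕ)) ∧
        (bipGraph n m E).Adj q.1 q.2}.ncard := by
  unfold eCount
  symm
  refine Set.ncard_congr (fun q _ => s(q.1, q.2)) ?_ ?_ ?_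
  · rintro ⟨x, y⟩ ⟨_, _, h⟩
    exact h
  · rintro ⟨x, y⟩ ⟨x', y'⟩ ⟨h1, h2, _⟩ ⟨h1', h2', _⟩ h
    simp only [Finset.mem_filter, Finset.mem_univ, true_and] at h1 h2 h1' h2'
    dsimp only at h
    rcases Sym2.eq_iff.1 h with ⟨rfl, rfl⟩ | ⟨rfl, rfl⟩
    · rfl
    · omega
  · intro e
    induction e with
    | _ x y =>
      intro h
      rcases id h with ⟨h1, h2, _⟩ | ⟨h1, h2, _⟩
      · exact ⟨(x, y), ⟨by simpa using h1, by simpa using h2, h⟩, rfl⟩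
      · exact ⟨(y, x), ⟨by simpa using h1, by simpa using h2, h.symm⟩, Sym2.eq_swap⟩

open Classical in
lemma ncard_bipGraph (n m : ℕ) (E : ℕ → ℕ → Prop) (X Y : Finset (Fin n))
    (hX : ∀ x ∈ X, (x : ℕ) < m) (hY : ∀ y ∈ Y, m ≤ (y : ℕ)) :
    {q : Fin n × Fin n | q.1 ∈ X ∧ q.2 ∈ Y ∧ (bipGraph n m E).Adj q.1 q.2}.ncard =
      (((X.map Fin.valEmbedding) ×ˢ (Y.map Fin.valEmbedding)).filter
        fun q => E q.1 q.2).card := by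
  rw [← Set.ncard_coe_finset]
  refine Set.ncard_congr (fun q _ => ((q.1 : ℕ), (q.2 : ℕ))) ?_ ?_ ?_
  · rintro ⟨x, y⟩ ⟨h1, h2, h⟩
    have hx := hX x h1
    have hy := hY y h2
    have hE : E x y := by
      rcases h with h | h
      · exact h.2.2
      · have := h.1
        dsimp only at this
        omega
    exact Finset.mem_coe.2 <| Finset.mem_filter.2 ⟨Finset.mem_product.2
      ⟨Finset.mem_map_of_mem _ h1, Finset.mem_map_of_mem _ h2⟩, hE⟩
  · rintro ⟨x, y⟩ ⟨x', y'⟩ _ _ h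
    simpa [Fin.ext_iff] using h
  · rintro ⟨u, v⟩ h
    simp only [Finset.coe_filter, Finset.mem_product, Finset.mem_map, Set.mem_ofPred_eq] at h
    obtain ⟨⟨⟨x, hx, rfl⟩, ⟨y, hy, rfl⟩⟩, hE⟩ := h
    exact ⟨(x, y), ⟨hx, hy, Or.inl ⟨hX x hx, hY y hy, hE⟩⟩, rfl⟩

theorem exists_quasirandom_bipartite (δ : ℝ) (hδ : 0 < δ) (p : ℝ) (hp : p ∈ Set.Ioc (0 : ℝ) 1) :
    ∃ N : ℕ, ∀ n : ℕ, N ≤ n → 2 ∣ n →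
      ∃ B : SimpleGraph (Fin n),
        (∀ x y : Fin n, B.Adj x y →
          ((x : ℕ) < n / 2 ∧ n / 2 ≤ (y : ℕ)) ∨ ((y : ℕ) < n / 2 ∧ n / 2 ≤ (x : ℕ))) ∧
        |(eCount B : ℝ) - p * (n : ℝ) ^ 2 / 4| ≤ δ * (n : ℝ) ^ 2 ∧
        ∀ X Y : Finset (Fin n), (∀ x ∈ X, (x : ℕ) < n / 2) → (∀ y ∈ Y, n / 2 ≤ (y : ℕ)) →
          |({q : Fin n × Fin n | q.1 ∈ X ∧ q.2 ∈ Y ∧ B.Adj q.1 q.2}.ncard : ℝ) -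
              p * (X.card : ℝ) * (Y.card : ℝ)| ≤ δ * (n : ℝ) ^ 2 := by
  classical
  obtain ⟨N, hN⟩ := exists_relation δ hδ p hp
  refine ⟨2 * N, fun n hn h2 => ?_⟩
  obtain ⟨m, rfl⟩ := h2
  have hm : 2 * m / 2 = m := by omega
  rw [hm]
  obtain ⟨E, hE⟩ := hN m (by omega)
  have key : ∀ X Y : Finset (Fin (2 * m)), (∀ x ∈ X, (x : ℕ) < m) → (∀ y ∈ Y, m ≤ (y : ℕ)) →
      |({q : Fin (2 * m) × Fin (2 * m) |
          q.1 ∈ X ∧ q.2 ∈ Y ∧ (bipGraph (2 * m) m E).Adj q.1 q.2}.ncard : ℝ) -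
        p * (X.card : ℝ) * (Y.card : ℝ)| ≤ δ * ((2 * m : ℕ) : ℝ) ^ 2 := by
    intro X Y hX hY
    have h := hE (X.map Fin.valEmbedding) (Y.map Fin.valEmbedding)
      (by
        intro u hu
        obtain ⟨x, hx, rfl⟩ := Finset.mem_map.1 hu
        exact Finset.mem_range.2 (hX x hx))
      (by
        intro u hu
        obtain ⟨x, hx, rfl⟩ := Finset.mem_map.1 hu
        exact Finset.mem_range.2 x.2)
    rw [ncard_bipGraph (2 * m) m E X Y hX hY]
    simp only [Finset.card_map] at h
    refine h.trans ?_
    push_cast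
    nlinarith [mul_nonneg hδ.le (sq_nonneg (m : ℝ))]
  refine ⟨bipGraph (2 * m) m E, ?_, ?_, key⟩
  · rintro x y (h | h)
    · exact Or.inl ⟨h.1, h.2.1⟩
    · exact Or.inr ⟨h.1, h.2.1⟩
  · have hA : (Finset.univ.filter fun x : Fin (2 * m) => (x : ℕ) < m).card = m := by
      rw [Fin.card_filter_val_lt]; omega
    have hB : (Finset.univ.filter fun x : Fin (2 * m) => m ≤ (x : ℕ)).card = m := by
      have h := Finset.card_filter_add_card_filter_not (s := (Finset.univ : Finset (Fin (2 * m))))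
        (fun x => (x : ℕ) < m)
      simp only [not_lt, hA, Finset.card_univ, Fintype.card_fin] at h
      omega
    have h := key (Finset.univ.filter fun x => (x : ℕ) < m)
      (Finset.univ.filter fun y => m ≤ (y : ℕ)) (by simp) (by simp)
    rw [← eCount_bipGraph, hA, hB] at h
    have e : p * ((2 * m : ℕ) : ℝ) ^ 2 / 4 = p * m * m := by push_cast; ring
    rwa [e]
end
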